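/- arXiv:2605.31386 — 5 statements merged into one kernel-verified Lean document; each statement's English description precedes it below -/
import Mathlib

section
/- For every accuracy ε ∈ (0,1) and smoothness parameter M > 0, there exist a natural number n with n ≤ C · ε^{-log_ρ 2} (for a universal constant C > 0, where ρ = 1 + √2 is the silver ratio) and a stepsize schedule α_0, …, α_{n-1} ∈ ℝ, such that for every dimension d, every convex function f : ℝ^d → ℝ that is differentiable with M-Lipschitz gradient and attains a minimizer x*, and every initial point x_0, the gradient descent iterates x_{t+1} = x_t − α_t ∇f(x_t) satisfy f(x_n) − f(x*) ≤ ε · M‖x_0 − x*‖². -/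
open scoped RealInnerProductSpace in
/-- The pointwise interpolation inequality of a convex function whose gradient is `L`-Lipschitz. -/
theorem ConvexOn.add_inner_add_norm_sq_le {E : Type*} [NormedAddCommGroup E]
    [InnerProductSpace ℝ E] [CompleteSpace E] {f : E → ℝ} {g : E → E} {L : ℝ}
    (hL : 0 < L) (hconv : ConvexOn ℝ Set.univ f) (hgrad : ∀ x, HasGradientAt f (g x) x)
    (hlip : ∀ x y, ‖g x - g y‖ ≤ L * ‖x - y‖) (x y : E) :
    f y + ⟪g y, x - y⟫ + ‖g x - g y‖ ^ 2 / (2 * L) ≤ f x := by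
  have hline (a v : E) (t : ℝ) :
      HasDerivAt (fun t : ℝ ↦ f (a + t • v)) ⟪g (a + t • v), v⟫ t := by
    have h1 : HasDerivAt (fun t : ℝ ↦ a + t • v) v t := by
      simpa using ((hasDerivAt_id t).smul_const v).const_add a
    have h2 := (hgrad (a + t • v)).hasFDerivAt.comp_hasDerivAt t h1
    simpa [Function.comp_def] using h2
  have hfirst (a b : E) : f a + ⟪g a, b - a⟫ ≤ f b := by
    have hc : ConvexOn ℝ Set.univ (fun t : ℝ ↦ f (a + t • (b - a))) := by
      have := hconv.comp_affineMap (AffineMap.lineMap a b : ℝ →ᵃ[ℝ] E)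
      simpa [Function.comp_def, AffineMap.lineMap_apply, add_comm] using this
    have h := hc.le_slope_of_hasDerivAt (Set.mem_univ 0) (Set.mem_univ 1) one_pos
      (hline a (b - a) 0)
    simp [slope_def_field] at h
    linarith
  have hdescent (a v : E) : f (a + v) ≤ f a + ⟪g a, v⟫ + L / 2 * ‖v‖ ^ 2 := by
    have hd (t : ℝ) : HasDerivAt
        (fun t : ℝ ↦ f (a + t • v) - t * ⟪g a, v⟫ - t ^ 2 * (L / 2 * ‖v‖ ^ 2))
        (⟪g (a + t • v), v⟫ - ⟪g a, v⟫ - 2 * t * (L / 2 * ‖v‖ ^ 2)) t := by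
      have h1 := (hasDerivAt_id t).mul_const ⟪g a, v⟫
      have h2 := (hasDerivAt_pow 2 t).mul_const (L / 2 * ‖v‖ ^ 2)
      simpa [Pi.sub_def] using ((hline a v t).sub h1).sub h2
    have hanti : AntitoneOn
        (fun t : ℝ ↦ f (a + t • v) - t * ⟪g a, v⟫ - t ^ 2 * (L / 2 * ‖v‖ ^ 2))
        (Set.Icc 0 1) := by
      refine antitoneOn_of_deriv_nonpos (convex_Icc 0 1)
        (fun t _ ↦ (hd t).continuousAt.continuousWithinAt)
        (fun t _ ↦ (hd t).differentiableAt.differentiableWithinAt) fun t ht ↦ ?_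
      rw [interior_Icc] at ht
      rw [(hd t).deriv, ← inner_sub_left]
      have h1 := real_inner_le_norm (g (a + t • v) - g a) v
      have h2 := hlip (a + t • v) a
      rw [add_sub_cancel_left, norm_smul, Real.norm_of_nonneg ht.1.le] at h2
      nlinarith [mul_le_mul_of_nonneg_right h2 (norm_nonneg v)]
    have h := hanti (Set.left_mem_Icc.2 zero_le_one) (Set.right_mem_Icc.2 zero_le_one) zero_le_one
    simp at h
    linarith
  have h1 := hfirst y (x - L⁻¹ • (g x - g y))
  have h2 := hdescent x (-(L⁻¹ • (g x - g y)))
  rw [← sub_eq_add_neg] at h2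
  have h3 : ⟪g x, g x - g y⟫
      = ⟪g y, g x - g y⟫ + ‖g x - g y‖ ^ 2 := by
    rw [← real_inner_self_eq_norm_sq, ← inner_add_left, add_sub_cancel]
  rw [sub_right_comm, inner_sub_right, inner_smul_right] at h1
  rw [norm_neg, norm_smul, inner_neg_right, inner_smul_right, h3, norm_inv,
    Real.norm_of_nonneg hL.le] at h2
  have h4 : L / 2 * (L⁻¹ * ‖g x - g y‖) ^ 2
      = ‖g x - g y‖ ^ 2 / (2 * L) := by field_simp
  have h5 : L⁻¹ * ‖g x - g y‖ ^ 2
      = 2 * (‖g x - g y‖ ^ 2 / (2 * L)) := by field_simp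
  linarith

namespace SilverStepsize

open Finset
open scoped RealInnerProductSpace

variable {E : Type*} [NormedAddCommGroup E] [InnerProductSpace ℝ E]

/-- The `L = 1` interpolation inequality between function values `f` and gradients `G`. -/
def Interpolates (f : E → ℝ) (G : E → E) : Prop :=
  ∀ x y, f y + ⟪G y, x - y⟫ + ‖G x - G y‖ ^ 2 / 2 ≤ f x

/-- `x` runs gradient descent with gradient `G` and stepsizes `h` for `n` steps. -/
def IsDescent (G : E → E) (h : ℕ → ℝ) (n : ℕ) (x : ℕ → E) : Prop :=
  ∀ t < n, x (t + 1) = x t - h t • G (x t)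

/-- The lower model at `p` contributed by the point `z`. -/
noncomputable def cut (f : E → ℝ) (G : E → E) (z p : E) : ℝ :=
  f z + ⟪G z, p - z⟫ + ‖G z‖ ^ 2 / 2

/-- The weighted sum at `p` of the lower models along the trajectory `x`: the iterate before each
step is weighted by its stepsize, and the last iterate has weight one. -/
noncomputable def model (f : E → ℝ) (G : E → E) (h : ℕ → ℝ) (n : ℕ) (x : ℕ → E) (p : E) : ℝ :=
  ∑ i ∈ range n, h i * cut f G (x i) p + cut f G (x n) p

/-- A schedule is primitive for `(f, G)` if along each of its trajectories the lower models
certify the last iterate. -/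
def Primitive (f : E → ℝ) (G : E → E) (h : ℕ → ℝ) (n : ℕ) (s : ℝ) : Prop :=
  ∀ x : ℕ → E, IsDescent G h n x →
    (s + 1) * f (x n) + s * (s + 1) / 2 * ‖G (x n)‖ ^ 2 + ‖x 0 - x n + G (x n)‖ ^ 2 / 2
      ≤ model f G h n x (x 0)

variable {f : E → ℝ} {G : E → E} {h : ℕ → ℝ} {n : ℕ} {x : ℕ → E}

theorem IsDescent.sum_smul_eq (hx : IsDescent G h n x) :
    ∑ i ∈ range n, h i • G (x i) = x 0 - x n := by
  rw [← sum_range_sub']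
  refine sum_congr rfl fun i hi ↦ ?_
  rw [hx i (mem_range.1 hi), sub_sub_cancel]

theorem cut_eq_add_inner (z p q : E) : cut f G z p = cut f G z q + ⟪G z, p - q⟫ := by
  have : p - z = (q - z) + (p - q) := by abel
  rw [cut, cut, this, inner_add_right]
  ring

theorem model_eq_add_inner (hx : IsDescent G h n x) (p q : E) :
    model f G h n x p = model f G h n x q + ⟪x 0 - x n + G (x n), p - q⟫ := by
  rw [model, model, inner_add_left, ← hx.sum_smul_eq, sum_inner, cut_eq_add_inner (x n) p q]
  simp_rw [cut_eq_add_inner (x _) p q, real_inner_smul_left, mul_add, sum_add_distrib]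
  ring

theorem model_add (m : ℕ) (p : E) :
    model f G h (n + 1 + m) x p = model f G h n x p + (h n - 1) * cut f G (x n) p
      + model f G (fun i ↦ h (n + 1 + i)) m (fun i ↦ x (n + 1 + i)) p := by
  rw [model, model, model, sum_range_add, sum_range_succ]
  ring

theorem Interpolates.cut_le (hf : Interpolates f G) (z p : E) :
    cut f G z p - ⟪G z, G p⟫ + ‖G p‖ ^ 2 / 2 ≤ f p := by
  have := hf p z
  rw [norm_sub_sq_real, real_inner_comm (G z) (G p)] at this
  rw [cut]
  linarith

theorem Interpolates.model_le (hf : Interpolates f G) (hx : IsDescent G h n x)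
    (hh : ∀ t < n, 0 ≤ h t) (p : E) :
    model f G h n x p - ⟪x 0 - x n + G (x n), G p⟫
      + (∑ i ∈ range n, h i + 1) * (‖G p‖ ^ 2 / 2) ≤ (∑ i ∈ range n, h i + 1) * f p := by
  have hsum : ∑ i ∈ range n, h i * (cut f G (x i) p - ⟪G (x i), G p⟫ + ‖G p‖ ^ 2 / 2)
      ≤ ∑ i ∈ range n, h i * f p :=
    sum_le_sum fun i hi ↦ mul_le_mul_of_nonneg_left (hf.cut_le _ _) (hh i (mem_range.1 hi))
  have hlast := hf.cut_le (x n) p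
  rw [model, inner_add_left, ← hx.sum_smul_eq, sum_inner]
  simp_rw [real_inner_smul_left]
  simp_rw [mul_add, mul_sub, sum_add_distrib, sum_sub_distrib, ← sum_mul] at hsum
  linarith

/-- Along a step of length `1 + τ` followed by a primitive schedule of total length `r * τ - 1`,
where `r` is the silver ratio, the last function value drops below the first one. -/
theorem Interpolates.add_norm_sq_le_of_primitive (hf : Interpolates f G) {r τ : ℝ}
    (hr : r ^ 2 = 2 * r + 1) (hr1 : 1 < r) (hτ : 0 < τ) (hh : ∀ t < n, 0 ≤ h t)
    (hs : ∑ i ∈ range n, h i = r * τ - 1) (hp : Primitive f G h n (r * τ - 1))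
    (hx : IsDescent G h n x) {y : E} (hy : x 0 = y - (1 + τ) • G y) :
    f (x n) + (τ + 1 - r * τ) / 2 * ‖G y‖ ^ 2
      + (3 * (r * τ - 1) + 2 + τ) / 2 * ‖G (x n)‖ ^ 2 ≤ f y := by
  have hB := hp x hx
  have h1 := hf.model_le hx hh y
  have h2 := hf.model_le hx hh (x n)
  have h3 := hf (x n) y
  rw [model_eq_add_inner hx y (x 0), hs] at h1
  rw [model_eq_add_inner hx (x n) (x 0), hs] at h2
  set D := x 0 - x n + G (x n) with hD
  have e1 : y - x 0 = (1 + τ) • G y := by rw [hy]; abel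
  have e2 : x n - x 0 = G (x n) - D := by rw [hD]; abel
  have e3 : x n - y = G (x n) - D - (1 + τ) • G y := by rw [← e2, ← e1]; abel
  rw [e1] at h1
  rw [e2] at h2
  rw [e3] at h3
  simp only [inner_sub_right, inner_smul_right, norm_sub_sq_real,
    real_inner_self_eq_norm_sq] at h1 h2 h3
  rw [real_inner_comm (G (x n)) (G y), real_inner_comm D (G y)] at h3
  have hpos : 0 < (r - 1) * τ := mul_pos (by linarith) hτ
  refine le_of_mul_le_mul_left ?_ hpos
  linear_combination h1 + h2 + 2 * hB + τ * h3
    + τ ^ 2 / 2 * (‖G (x n)‖ ^ 2 - ‖G y‖ ^ 2) * hr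

theorem Primitive.concat (hf : Interpolates f G) {r τ : ℝ}
    (hr : r ^ 2 = 2 * r + 1) (hr1 : 1 < r) (hτ : 0 < τ) (hh : ∀ t < n, 0 ≤ h t)
    (hs : ∑ i ∈ range n, h i = r * τ - 1) (hp : Primitive f G h n (r * τ - 1))
    {k : ℕ → ℝ} (hk₁ : ∀ t < n, k t = h t) (hkn : k n = 1 + τ)
    (hk₂ : ∀ t < n, k (n + 1 + t) = h t) :
    Primitive f G k (n + 1 + n) (r * (r * τ) - 1) := by
  intro x hx
  have hcongr {l : ℕ → ℝ} (hl : ∀ t < n, l t = h t) (z : ℕ → E) (p : E) :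
      model f G l n z p = model f G h n z p := by
    rw [model, model, sum_congr rfl fun i hi ↦ by rw [hl i (mem_range.1 hi)]]
  have hx₁ : IsDescent G h n x := fun t ht ↦ by rw [hx t (by omega), hk₁ t ht]
  have hx₂ : IsDescent G h n (fun i ↦ x (n + 1 + i)) := fun t ht ↦ by
    have := hx (n + 1 + t) (by omega)
    rwa [hk₂ t ht] at this
  have hstep : x (n + 1) = x n - (1 + τ) • G (x n) := by rw [hx n (by omega), hkn]
  have hA := hp x hx₁
  have hB := hp _ hx₂
  have hK := hf.add_norm_sq_le_of_primitive hr hr1 hτ hh hs hp hx₂ (y := x n) (by simpa using hstep)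
  rw [model_add, hcongr hk₁, hcongr hk₂, model_eq_add_inner hx₂ _ (x (n + 1)), hkn, cut]
  simp only [add_zero] at hA hB hK ⊢
  set D := x (n + 1) - x (n + 1 + n) + G (x (n + 1 + n))
  have e1 : x 0 - x (n + 1) = x 0 - x n + (1 + τ) • G (x n) := by rw [hstep]; abel
  have e2 : x 0 - x (n + 1 + n) + G (x (n + 1 + n)) = x 0 - x n + (1 + τ) • G (x n) + D := by
    rw [← e1]; simp only [D]; abel
  have e3 : r * (r * τ) = (2 * r + 1) * τ := by linear_combination τ * hr
  rw [e1, e2, e3]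
  simp only [norm_add_sq_real, inner_add_left, inner_add_right, inner_smul_left, inner_smul_right,
    norm_smul, mul_pow, Real.norm_eq_abs, sq_abs, conj_trivial] at hA hB hK ⊢
  rw [real_inner_comm (G (x n)) (x 0 - x n)] at *
  rw [real_inner_comm D (x 0 - x n), real_inner_comm D (G (x n))]
  have hpos : 0 ≤ (r + 1) * τ := mul_nonneg (by linarith) hτ.le
  linear_combination hA + hB + (r + 1) * τ * hK

/-- The silver stepsize schedule of length `2 ^ k - 1`. -/
noncomputable def silver (r : ℝ) : ℕ → ℕ → ℝ
  | 0, _ => 0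
  | k + 1, t =>
    if t < 2 ^ k - 1 then silver r k t
    else if t = 2 ^ k - 1 then 1 + r ^ k / r
    else silver r k (t - 2 ^ k)

theorem silver_succ_of_lt {r : ℝ} {k t : ℕ} (ht : t < 2 ^ k - 1) :
    silver r (k + 1) t = silver r k t := by
  rw [silver, if_pos ht]

theorem silver_succ_self (r : ℝ) (k : ℕ) : silver r (k + 1) (2 ^ k - 1) = 1 + r ^ k / r := by
  simp [silver]

theorem silver_succ_add (r : ℝ) (k t : ℕ) :
    silver r (k + 1) (2 ^ k - 1 + 1 + t) = silver r k t := by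
  have := Nat.one_le_two_pow (n := k)
  rw [silver, if_neg (by omega), if_neg (by omega), Nat.sub_add_cancel this, Nat.add_sub_cancel_left]

theorem two_pow_succ_sub_one (k : ℕ) : 2 ^ (k + 1) - 1 = 2 ^ k - 1 + 1 + (2 ^ k - 1) := by
  have := Nat.one_le_two_pow (n := k)
  omega

theorem silver_nonneg {r : ℝ} (hr : 0 < r) (k t : ℕ) : 0 ≤ silver r k t := by
  induction k generalizing t with
  | zero => exact le_rfl
  | succ k ih =>
    rw [silver]
    split_ifs
    · exact ih t
    · positivity
    · exact ih _

theorem sum_silver {r : ℝ} (hr : r ^ 2 = 2 * r + 1) (hr0 : r ≠ 0) (k : ℕ) :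
    ∑ i ∈ range (2 ^ k - 1), silver r k i = r ^ k - 1 := by
  induction k with
  | zero => simp
  | succ k ih =>
    rw [two_pow_succ_sub_one, sum_range_add, sum_range_succ, silver_succ_self]
    simp_rw [silver_succ_add]
    rw [sum_congr rfl fun i hi ↦ silver_succ_of_lt (mem_range.1 hi), ih]
    field_simp
    linear_combination (-r ^ k) * hr

theorem primitive_silver (hf : Interpolates f G) {r : ℝ} (hr : r ^ 2 = 2 * r + 1) (hr1 : 1 < r)
    (k : ℕ) : Primitive f G (silver r k) (2 ^ k - 1) (r ^ k - 1) := by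
  have hr0 : 0 < r := by linarith
  induction k with
  | zero =>
    intro x _
    simp [model, cut]
  | succ k ih =>
    have hk : r ^ k = r * (r ^ k / r) := by field_simp
    have hk' : r ^ (k + 1) = r * (r * (r ^ k / r)) := by rw [← hk, pow_succ']
    rw [two_pow_succ_sub_one, hk']
    rw [hk] at ih
    exact ih.concat hf hr hr1 (by positivity) (fun t _ ↦ silver_nonneg hr0 k t)
      (by rw [sum_silver hr hr0.ne', ← hk]) (fun t ht ↦ silver_succ_of_lt ht)
      (silver_succ_self r k) (fun t _ ↦ silver_succ_add r k t)

theorem Interpolates.sub_le_of_isDescent_silver (hf : Interpolates f G) {r : ℝ}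
    (hr : r ^ 2 = 2 * r + 1) (hr1 : 1 < r) {k : ℕ} (hx : IsDescent G (silver r k) (2 ^ k - 1) x)
    {y : E} (hy : G y = 0) : f (x (2 ^ k - 1)) - f y ≤ ‖x 0 - y‖ ^ 2 / (2 * r ^ k) := by
  have hr0 : 0 < r := by linarith
  have h1 := primitive_silver hf hr hr1 k x hx
  have h2 := hf.model_le hx (fun t _ ↦ silver_nonneg hr0 k t) y
  rw [model_eq_add_inner hx y (x 0), sum_silver hr hr0.ne'] at h2
  set D := x 0 - x (2 ^ k - 1) + G (x (2 ^ k - 1))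
  have h3 : 0 ≤ ‖x 0 - y - D‖ ^ 2 := sq_nonneg _
  rw [norm_sub_sq_real, real_inner_comm] at h3
  rw [← neg_sub (x 0) y, inner_neg_right, hy, inner_zero_right, norm_zero] at h2
  have h4 : 0 ≤ (r ^ k - 1) * r ^ k * ‖G (x (2 ^ k - 1))‖ ^ 2 := by
    have := one_le_pow₀ hr1.le (n := k)
    have : 0 ≤ r ^ k - 1 := by linarith
    positivity
  rw [le_div_iff₀ (by positivity)]
  linarith

end SilverStepsize


/-- **Silver stepsizes for convex optimization** (Theorem 1).
For every accuracy `ε ∈ (0,1)` and smoothness `M > 0`, there is a stepsize schedule of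
length `n ≲ ε^(-log_ρ 2)` (where `ρ = 1 + √2` is the silver ratio) such that gradient
descent minimizes any `M`-smooth convex function to error `ε · M‖x₀ - x*‖²`. -/
theorem silver_stepsizes_convex :
    ∃ C : ℝ, 0 < C ∧
      ∀ ε : ℝ, ε ∈ Set.Ioo (0 : ℝ) 1 → ∀ M : ℝ, 0 < M →
        ∃ (n : ℕ) (α : ℕ → ℝ),
          (n : ℝ) ≤ C * ε ^ (-(Real.log 2 / Real.log (1 + Real.sqrt 2))) ∧
          ∀ (d : ℕ) (f : EuclideanSpace ℝ (Fin d) → ℝ),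
            ConvexOn ℝ Set.univ f →
            Differentiable ℝ f →
            (∀ x y : EuclideanSpace ℝ (Fin d),
              ‖gradient f x - gradient f y‖ ≤ M * ‖x - y‖) →
            ∀ xstar : EuclideanSpace ℝ (Fin d), (∀ y, f xstar ≤ f y) →
            ∀ x : ℕ → EuclideanSpace ℝ (Fin d),
              (∀ t, x (t + 1) = x t - α t • gradient f (x t)) →
              f (x n) - f xstar ≤ ε * M * ‖x 0 - xstar‖ ^ 2 := by
  set r : ℝ := 1 + Real.sqrt 2 with hrdef
  have hr : r ^ 2 = 2 * r + 1 := by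
    rw [hrdef]
    linear_combination Real.sq_sqrt (zero_le_two : (0 : ℝ) ≤ 2)
  have hr1 : 1 < r := by
    rw [hrdef]
    linarith [Real.sqrt_pos.2 (zero_lt_two : (0 : ℝ) < 2)]
  have hr0 : 0 < r := by linarith
  refine ⟨2, two_pos, fun ε hε M hM ↦ ?_⟩
  obtain ⟨k, hk₁, hk₂⟩ := exists_nat_pow_near (one_le_inv_iff₀.2 ⟨hε.1, hε.2.le⟩) hr1
  refine ⟨2 ^ (k + 1) - 1, fun t ↦ SilverStepsize.silver r (k + 1) t / M, ?_, ?_⟩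
  · have h1 : ((2 : ℝ) ^ k) = (r ^ k) ^ (Real.log 2 / Real.log r) := by
      rw [← Real.rpow_natCast r k, ← Real.rpow_mul hr0.le, mul_comm, Real.rpow_mul hr0.le,
        ← Real.logb, Real.rpow_logb hr0 hr1.ne' two_pos, Real.rpow_natCast]
    have h2 : (2 : ℝ) ^ k ≤ ε ^ (-(Real.log 2 / Real.log r)) := by
      rw [h1, Real.rpow_neg hε.1.le, ← Real.inv_rpow hε.1.le]
      exact Real.rpow_le_rpow (by positivity) hk₁
        (div_nonneg (Real.log_nonneg one_le_two) (Real.log_nonneg hr1.le))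
    rw [Nat.cast_sub Nat.one_le_two_pow]
    push_cast
    rw [pow_succ]
    linarith
  · intro d f hconv hdiff hlip xstar hmin x hx
    have hf : SilverStepsize.Interpolates (fun z ↦ f z / M) (fun z ↦ M⁻¹ • gradient f z) := by
      intro a b
      have h := div_le_div_of_nonneg_right
        (hconv.add_inner_add_norm_sq_le hM
          (fun z ↦ (hdiff z).hasGradientAt) hlip a b) hM.le
      rw [← smul_sub, norm_smul, norm_inv, Real.norm_of_nonneg hM.le, real_inner_smul_left]
      refine le_of_eq_of_le ?_ h
      field_simp
    have hx' : SilverStepsize.IsDescent (fun z ↦ M⁻¹ • gradient f z)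
        (SilverStepsize.silver r (k + 1)) (2 ^ (k + 1) - 1) x := fun t _ ↦ by
      rw [hx t, smul_smul, ← div_eq_mul_inv]
    have hstar : gradient f xstar = 0 := by
      have : IsLocalMin f xstar := Filter.Eventually.of_forall hmin
      rw [gradient, this.fderiv_eq_zero, map_zero]
    have h := hf.sub_le_of_isDescent_silver hr hr1 hx' (y := xstar) (by rw [hstar, smul_zero])
    rw [← sub_div, div_le_iff₀ hM] at h
    have h3 : 1 / (2 * r ^ (k + 1)) ≤ ε := by
      rw [div_le_iff₀ (by positivity)]
      have := (inv_lt_iff_one_lt_mul₀ hε.1).1 hk₂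
      nlinarith
    calc f (x (2 ^ (k + 1) - 1)) - f xstar
        ≤ 1 / (2 * r ^ (k + 1)) * (M * ‖x 0 - xstar‖ ^ 2) := by
          refine h.trans_eq ?_
          ring
      _ ≤ ε * (M * ‖x 0 - xstar‖ ^ 2) := by gcongr
      _ = ε * M * ‖x 0 - xstar‖ ^ 2 := by ring
end

section
/- There is a universal constant C > 0 such that the following holds. Fix M > 0, an integer k ≥ 1, and set n = 2^k − 1. Define the silver stepsize schedule α_t = (1 + ρ^{ν(t+1)−1})/M for t = 0, …, n−1, where ρ = 1 + √2 and ν(t) is the 2-adic valuation of t (the largest integer i with 2^i dividing t). Then for every dimension d, every convex function f : ℝ^d → ℝ that is differentiable with M-Lipschitz gradient and attains a minimizer x*, and every initial point x_0, the gradient descent iterates x_{t+1} = x_t − α_t ∇f(x_t) satisfy f(x_n) − f(x*) ≤ C · M‖x_0 − x*‖² · n^{−log_2 ρ}. -/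
open scoped RealInnerProductSpace

/-- Let `b` be reached from `a` by a step of length `1 + (r - 1) * s` along `-g` followed by a silver
block with parameter `s`. The energy inequality of that block, with the reference points `a - g` and
`b - h`, and the cocoercivity of the gradient between `a` and `b` bound the decrease of the
objective. -/
theorem silver_objective_decrease {E : Type*} [NormedAddCommGroup E] [InnerProductSpace ℝ E]
    {a b g h : E} {fa fb r s : ℝ} (hr : r ^ 2 = 2) (hr0 : 0 ≤ r) (hs : 0 ≤ s)
    (ha : (s ^ 2 - s) * ‖h‖ ^ 2 + ‖b - (a - g)‖ ^ 2 + 2 * (s - 1) * (fb - (fa - ‖g‖ ^ 2 / 2)) ≤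
      ‖a - (1 + (r - 1) * s) • g - (a - g)‖ ^ 2)
    (hb : (s ^ 2 - s) * ‖h‖ ^ 2 + ‖b - (b - h)‖ ^ 2 + 2 * (s - 1) * (fb - (fb - ‖h‖ ^ 2 / 2)) ≤
      ‖a - (1 + (r - 1) * s) • g - (b - h)‖ ^ 2)
    (hab : fb + ⟪h, a - b⟫ + ‖g - h‖ ^ 2 / 2 ≤ fa)
    (hba : fa + ⟪g, b - a⟫ + ‖h - g‖ ^ 2 / 2 ≤ fb) :
    2 * (r * s) * (fb - fa) + (2 * (1 + r) * s ^ 2 - r * s) * ‖h‖ ^ 2 ≤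
      (2 * (r - 1) * s ^ 2 - r * s) * ‖g‖ ^ 2 := by
  have e := real_inner_comm (F := E)
  simp only [← real_inner_self_eq_norm_sq, inner_sub_left, inner_sub_right,
    inner_smul_left, inner_smul_right, RCLike.conj_to_real, e a b, e a g, e a h, e b g, e b h, e g h]
    at ha hb hab hba ⊢
  have h1 := mul_le_mul_of_nonneg_left ha (by positivity : 0 ≤ 1 + r)
  have h2 := mul_le_mul_of_nonneg_left hb (by positivity : 0 ≤ 1 + r)
  have h3 := mul_le_mul_of_nonneg_left hab (by positivity : 0 ≤ 2 * (1 + r))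
  have h4 := mul_le_mul_of_nonneg_left hba (by positivity : 0 ≤ 2 * s)
  linear_combination h1 + h2 + h3 + h4 + (-(2 * s * ⟪a, g⟫) + 2 * s * ⟪g, g⟫ +
    2 * s * ⟪b, g⟫ - 2 * s * ⟪g, h⟫ - 2 * s ^ 2 * ⟪g, g⟫ + 2 * r * s ^ 2 * ⟪g, g⟫) * hr

/-- The energy inequalities of two silver blocks with parameter `s`, joined by a step of length
`1 + (r - 1) * s`, combine to the energy inequality with parameter `(1 + r) * s`. -/
theorem silver_energy_join {E : Type*} [NormedAddCommGroup E] [InnerProductSpace ℝ E]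
    {a b g h z : E} {fa fb fz D r s : ℝ} (hr : r ^ 2 = 2) (hr1 : 1 ≤ r) (hs : 0 ≤ s)
    (ha : (s ^ 2 - s) * ‖g‖ ^ 2 + ‖a - z‖ ^ 2 + 2 * (s - 1) * (fa - fz) ≤ D)
    (hb : (s ^ 2 - s) * ‖h‖ ^ 2 + ‖b - z‖ ^ 2 + 2 * (s - 1) * (fb - fz) ≤
      ‖a - (1 + (r - 1) * s) • g - z‖ ^ 2)
    (haz : fa + ⟪g, z - a⟫ + ‖g‖ ^ 2 / 2 ≤ fz)
    (hab : 2 * (r * s) * (fb - fa) + (2 * (1 + r) * s ^ 2 - r * s) * ‖h‖ ^ 2 ≤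
      (2 * (r - 1) * s ^ 2 - r * s) * ‖g‖ ^ 2) :
    (((1 + r) * s) ^ 2 - (1 + r) * s) * ‖h‖ ^ 2 + ‖b - z‖ ^ 2 +
      2 * ((1 + r) * s - 1) * (fb - fz) ≤ D := by
  have e := real_inner_comm (F := E)
  simp only [← real_inner_self_eq_norm_sq, inner_sub_left, inner_sub_right,
    inner_smul_left, inner_smul_right, RCLike.conj_to_real, e a z, e b z, e a g, e g z]
    at ha hb hab haz ⊢
  have hμ : 0 ≤ 2 * (1 + (r - 1) * s) := by
    have := mul_nonneg (sub_nonneg.2 hr1) hs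
    positivity
  have h1 := mul_le_mul_of_nonneg_left haz hμ
  linear_combination ha + hb + hab + h1 + (s ^ 2 * ⟪h, h⟫ + s ^ 2 * ⟪g, g⟫) * hr

/-- The derivative of a function along a line, in terms of its gradient. -/
theorem hasDerivAt_comp_add_smul_gradient {E : Type*} [NormedAddCommGroup E] [InnerProductSpace ℝ E]
    [CompleteSpace E] {f : E → ℝ} (hd : Differentiable ℝ f) (x v : E) (t : ℝ) :
    HasDerivAt (fun t : ℝ => f (x + t • v)) ⟪gradient f (x + t • v), v⟫ t := by
  have hl : HasDerivAt (fun t : ℝ => x + t • v) v t := by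
    simpa using ((hasDerivAt_id t).smul_const v).const_add x
  exact (hd (x + t • v)).hasGradientAt.hasFDerivAt.comp_hasDerivAt t hl

/-- A differentiable convex function lies above its tangents. -/
theorem ConvexOn.add_inner_gradient_le {E : Type*} [NormedAddCommGroup E] [InnerProductSpace ℝ E]
    [CompleteSpace E]
    {f : E → ℝ} (hc : ConvexOn ℝ Set.univ f) (hd : Differentiable ℝ f) (x y : E) :
    f x + ⟪gradient f x, y - x⟫ ≤ f y := by
  have hg : ConvexOn ℝ Set.univ (fun t : ℝ => f (x + t • (y - x))) := by
    simpa [Function.comp_def, AffineMap.lineMap_apply, add_comm] using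
      hc.comp_affineMap (AffineMap.lineMap (k := ℝ) x y)
  have := hg.le_slope_of_hasDerivAt (Set.mem_univ 0) (Set.mem_univ 1) one_pos
    (hasDerivAt_comp_add_smul_gradient hd x (y - x) 0)
  rw [slope_def_field] at this
  simp only [zero_smul, add_zero, one_smul, add_sub_cancel, sub_zero, div_one] at this
  linarith

/-- The descent lemma for functions with `M`-Lipschitz gradient. -/
theorem le_add_inner_gradient_add_of_lipschitz {E : Type*} [NormedAddCommGroup E]
    [InnerProductSpace ℝ E]
    [CompleteSpace E]
    {f : E → ℝ} {M : ℝ} (hd : Differentiable ℝ f)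
    (hM : ∀ x y, ‖gradient f x - gradient f y‖ ≤ M * ‖x - y‖) (x v : E) :
    f (x + v) ≤ f x + ⟪gradient f x, v⟫ + M / 2 * ‖v‖ ^ 2 := by
  have hder (t : ℝ) : HasDerivAt
      (fun t : ℝ => f (x + t • v) - t * ⟪gradient f x, v⟫ - M / 2 * ‖v‖ ^ 2 * t ^ 2)
      (⟪gradient f (x + t • v), v⟫ - ⟪gradient f x, v⟫ - M * ‖v‖ ^ 2 * t) t := by
    have h := ((hasDerivAt_comp_add_smul_gradient hd x v t).sub
      ((hasDerivAt_id t).mul_const ⟪gradient f x, v⟫)).sub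
      ((hasDerivAt_pow 2 t).const_mul (M / 2 * ‖v‖ ^ 2))
    exact h.congr_deriv (by push_cast; ring)
  have hanti := antitoneOn_of_deriv_nonpos (convex_Icc (0 : ℝ) 1)
    (fun t _ => (hder t).continuousAt.continuousWithinAt)
    (fun t _ => (hder t).differentiableAt.differentiableWithinAt) (fun t ht => by
      rw [interior_Icc] at ht
      rw [(hder t).deriv, ← inner_sub_left]
      have h1 := real_inner_le_norm (gradient f (x + t • v) - gradient f x) v
      have h2 := hM (x + t • v) x
      rw [add_sub_cancel_left, norm_smul, Real.norm_of_nonneg ht.1.le] at h2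
      nlinarith [mul_le_mul_of_nonneg_right h2 (norm_nonneg v)])
  have := hanti (Set.left_mem_Icc.2 zero_le_one) (Set.right_mem_Icc.2 zero_le_one) zero_le_one
  simp only [zero_smul, add_zero, one_smul] at this
  linarith

/-- Cocoercivity of the gradient of an `M`-smooth convex function. -/
theorem ConvexOn.gradient_cocoercive {E : Type*} [NormedAddCommGroup E] [InnerProductSpace ℝ E]
    [CompleteSpace E]
    {f : E → ℝ} {M : ℝ} (hc : ConvexOn ℝ Set.univ f) (h0 : 0 < M) (hd : Differentiable ℝ f)
    (hM : ∀ x y, ‖gradient f x - gradient f y‖ ≤ M * ‖x - y‖) (x y : E) :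
    f y + ⟪gradient f y, x - y⟫ + ‖gradient f x - gradient f y‖ ^ 2 / (2 * M) ≤ f x := by
  set w := gradient f x - gradient f y with hw
  have h1 := le_add_inner_gradient_add_of_lipschitz hd hM x (-(M⁻¹ • w))
  have h2 := hc.add_inner_gradient_le hd y (x + -(M⁻¹ • w))
  have e : ⟪gradient f x, w⟫ = ⟪gradient f y, w⟫ + ‖w‖ ^ 2 := by
    rw [← real_inner_self_eq_norm_sq, ← inner_add_left, hw, add_sub_cancel]
  rw [add_sub_right_comm, inner_add_right] at h2
  rw [norm_neg, norm_smul, Real.norm_of_nonneg (inv_nonneg.2 h0.le), inner_neg_right,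
    inner_smul_right, e] at h1
  rw [inner_neg_right, inner_smul_right] at h2
  have : M / 2 * (M⁻¹ * ‖w‖) ^ 2 = ‖w‖ ^ 2 / (2 * M) := by field_simp
  have : M⁻¹ * ‖w‖ ^ 2 = 2 * (‖w‖ ^ 2 / (2 * M)) := by field_simp
  linarith

/-- The energy inequality for a silver block of `2 ^ k - 1` steps starting at a time divisible by
`2 ^ k`. The reference point `z` with value `fz` need not be a minimizer: every `y - G y` with value
`f y - ‖G y‖ ^ 2 / 2` qualifies as well. -/
theorem silver_block_energy_le {E : Type*} [NormedAddCommGroup E] [InnerProductSpace ℝ E]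
    {f : E → ℝ} {G : E → E} (hco : ∀ x y, f y + ⟪G y, x - y⟫ + ‖G x - G y‖ ^ 2 / 2 ≤ f x)
    {x : ℕ → E}
    (hx : ∀ t, x (t + 1) =
      x t - (1 + (1 + √2) ^ ((padicValNat 2 (t + 1) : ℤ) - 1)) • G (x t))
    (k : ℕ) {i : ℕ} (hi : 2 ^ k ∣ i) {z : E} {fz : ℝ}
    (hz : ∀ y, f y + ⟪G y, z - y⟫ + ‖G y‖ ^ 2 / 2 ≤ fz) :
    (((1 + √2) ^ k) ^ 2 - (1 + √2) ^ k) * ‖G (x (i + (2 ^ k - 1)))‖ ^ 2 +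
      ‖x (i + (2 ^ k - 1)) - z‖ ^ 2 +
      2 * ((1 + √2) ^ k - 1) * (f (x (i + (2 ^ k - 1))) - fz) ≤ ‖x i - z‖ ^ 2 := by
  induction k generalizing i z fz with
  | zero => simp
  | succ k ih =>
    have hstar (y : E) : ∀ w, f w + ⟪G w, (y - G y) - w⟫ + ‖G w‖ ^ 2 / 2 ≤
        f y - ‖G y‖ ^ 2 / 2 := fun w => by
      have h := hco y w
      rw [norm_sub_sq_real, real_inner_comm (G w) (G y)] at h
      rw [sub_right_comm, inner_sub_right]
      linarith
    have hik : 2 ^ k ∣ i := (pow_dvd_pow 2 k.le_succ).trans hi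
    have hpos : 0 < 2 ^ k := by positivity
    have hval : padicValNat 2 (i + 2 ^ k) = k := by
      obtain ⟨c, rfl⟩ := hi
      rw [show 2 ^ (k + 1) * c + 2 ^ k = 2 ^ k * (2 * c + 1) by ring,
        padicValNat.mul (by positivity) (by omega), padicValNat.prime_pow,
        padicValNat.eq_zero_of_not_dvd (by omega), add_zero]
    have hr : √2 ^ 2 = 2 := Real.sq_sqrt zero_le_two
    have hr1 : 1 ≤ √2 := Real.one_le_sqrt.2 one_le_two
    have hstep := hx (i + (2 ^ k - 1))
    have hμ : (1 + √2) ^ ((k : ℤ) - 1) = (√2 - 1) * (1 + √2) ^ k := by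
      rw [zpow_sub_one₀ (by positivity), zpow_natCast, mul_comm]
      congr 1
      rw [inv_eq_of_mul_eq_one_left]
      linear_combination hr
    rw [show i + (2 ^ k - 1) + 1 = i + 2 ^ k by omega, hval, hμ] at hstep
    have hblock {z : E} {fz : ℝ} (hz : ∀ y, f y + ⟪G y, z - y⟫ + ‖G y‖ ^ 2 / 2 ≤ fz) :=
      ih (i := i + 2 ^ k) (hik.add dvd_rfl) hz
    rw [show i + 2 ^ k + (2 ^ k - 1) = i + (2 ^ (k + 1) - 1) by rw [pow_succ]; omega, hstep]
      at hblock
    have hs : (0 : ℝ) ≤ (1 + √2) ^ k := by positivity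
    rw [pow_succ' (1 + √2)]
    exact silver_energy_join hr hr1 hs (ih hik hz) (hblock hz) (hz _)
      (silver_objective_decrease hr (zero_le_one.trans hr1) hs (hblock (hstar _)) (hblock (hstar _))
        (hco _ _) (hco _ _))

/-- **The silver stepsize schedule accelerates gradient descent for smooth convex
optimization.** With `ρ = 1 + √2`, `n = 2^k - 1`, and the explicit silver stepsizes
`α_t = (1 + ρ^(ν(t+1) - 1))/M` (where `ν` is the 2-adic valuation), gradient descent on
any `M`-smooth convex function satisfies `f(xₙ) - f(x*) ≤ C · M‖x₀ - x*‖² · n^(-log₂ ρ)`. -/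
theorem silver_stepsize_schedule_rate :
    ∃ C : ℝ, 0 < C ∧
      ∀ M : ℝ, 0 < M → ∀ k : ℕ, 1 ≤ k →
        ∀ n : ℕ, n = 2 ^ k - 1 →
        ∀ α : ℕ → ℝ,
          (∀ t, α t = (1 + (1 + Real.sqrt 2) ^ ((padicValNat 2 (t + 1) : ℤ) - 1)) / M) →
          ∀ (d : ℕ) (f : EuclideanSpace ℝ (Fin d) → ℝ),
            ConvexOn ℝ Set.univ f →
            Differentiable ℝ f →
            (∀ x y : EuclideanSpace ℝ (Fin d),
              ‖gradient f x - gradient f y‖ ≤ M * ‖x - y‖) →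
            ∀ xstar : EuclideanSpace ℝ (Fin d), (∀ y, f xstar ≤ f y) →
            ∀ x : ℕ → EuclideanSpace ℝ (Fin d),
              (∀ t, x (t + 1) = x t - α t • gradient f (x t)) →
              f (x n) - f xstar ≤
                C * M * ‖x 0 - xstar‖ ^ 2 *
                  (n : ℝ) ^ (-(Real.log (1 + Real.sqrt 2) / Real.log 2)) := by
  refine ⟨1, one_pos, fun M hM k hk n hn α hα d f hc hd hL xstar hmin x hx => ?_⟩
  have hgrad : gradient f xstar = 0 := by
    rw [gradient, (IsLocalMin.fderiv_eq_zero (Filter.Eventually.of_forall hmin)), map_zero]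
  have hco (x y : EuclideanSpace ℝ (Fin d)) : f y / M + ⟪M⁻¹ • gradient f y, x - y⟫ +
      ‖M⁻¹ • gradient f x - M⁻¹ • gradient f y‖ ^ 2 / 2 ≤ f x / M := by
    have h := div_le_div_of_nonneg_right (hc.gradient_cocoercive hM hd hL x y) hM.le
    rw [← smul_sub, norm_smul, Real.norm_of_nonneg (inv_nonneg.2 hM.le), inner_smul_left,
      RCLike.conj_to_real]
    refine le_trans (le_of_eq ?_) h
    field_simp
  have hblock := silver_block_energy_le (f := fun y => f y / M)
    (G := fun y => M⁻¹ • gradient f y) hco (x := x)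
    (fun t => by rw [hx, hα, smul_smul, div_eq_mul_inv]) k (dvd_zero _) (z := xstar)
    (fz := f xstar / M) (fun y => by simpa [hgrad] using hco xstar y)
  rw [zero_add, ← hn] at hblock
  have hρ : (2 : ℝ) ≤ 1 + √2 := by linarith [Real.one_le_sqrt.2 (one_le_two (α := ℝ))]
  have hrate : ((1 + √2) ^ k)⁻¹ ≤ (n : ℝ) ^ (-(Real.log (1 + √2) / Real.log 2)) := by
    have hn1 : 1 ≤ n := by have := Nat.pow_le_pow_right two_pos hk; omega
    have hn2 : (n : ℝ) ≤ 2 ^ k := by rw [hn]; exact_mod_cast Nat.sub_le _ _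
    have hlog : 0 ≤ Real.log (1 + √2) := Real.log_nonneg (by linarith)
    refine le_trans (le_of_eq ?_) (Real.rpow_le_rpow_of_nonpos (by exact_mod_cast hn1) hn2
      (neg_nonpos.2 (div_nonneg hlog (Real.log_nonneg one_le_two))))
    rw [Real.rpow_neg (by positivity), ← Real.rpow_natCast 2 k, ← Real.rpow_mul two_pos.le,
      mul_comm, Real.rpow_mul two_pos.le, Real.log_div_log,
      Real.rpow_logb two_pos (by norm_num) (by linarith), Real.rpow_natCast]
  have hs : 2 ≤ (1 + √2) ^ k := hρ.trans (le_self_pow₀ (by linarith) (by omega))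
  set s := (1 + √2) ^ k
  refine le_trans ?_ (mul_le_mul_of_nonneg_left hrate (by positivity))
  rw [← sub_div] at hblock
  have hgap : 0 ≤ (f (x n) - f xstar) / M := div_nonneg (sub_nonneg.2 (hmin _)) hM.le
  have h1 : 0 ≤ (s ^ 2 - s) * ‖M⁻¹ • gradient f (x n)‖ ^ 2 :=
    mul_nonneg (by nlinarith) (sq_nonneg _)
  have h2 : s * ((f (x n) - f xstar) / M) ≤ ‖x 0 - xstar‖ ^ 2 := by
    nlinarith [sq_nonneg ‖x n - xstar‖]
  rw [← div_eq_mul_inv, le_div_iff₀ (by linarith)]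
  calc _ = M * (s * ((f (x n) - f xstar) / M)) := by field_simp
    _ ≤ M * ‖x 0 - xstar‖ ^ 2 := mul_le_mul_of_nonneg_left h2 hM.le
    _ = _ := by ring
end

section
/- Let 0 < m < M, set S = √(M² + (M−m)²), α_0 = 2/(m+S), α_1 = 2/(2M+m−S), and R_2 = (S−M)/(2m+S−M). Then for every dimension d, every function f : ℝ^d → ℝ that is m-strongly convex and differentiable with M-Lipschitz gradient, with minimizer x*, and every initial point x_0, the two gradient descent iterates x_1 = x_0 − α_0 ∇f(x_0) and x_2 = x_1 − α_1 ∇f(x_1) satisfy ‖x_2 − x*‖ ≤ R_2 ‖x_0 − x*‖. -/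
open scoped RealInnerProductSpace

section Interpolation

variable {E : Type*} [NormedAddCommGroup E] [InnerProductSpace ℝ E] [CompleteSpace E]

lemma hasDerivAt_comp_line {f : E → ℝ} (hf : Differentiable ℝ f) (x v : E) (t : ℝ) :
    HasDerivAt (fun t : ℝ => f (x + t • v)) ⟪gradient f (x + t • v), v⟫ t := by
  have h := (hf (x + t • v)).hasGradientAt.hasFDerivAt
  have hl : HasDerivAt (fun t : ℝ => x + t • v) v t := by
    simpa using ((hasDerivAt_id t).smul_const v).const_add x
  simpa [Function.comp_def] using! h.comp_hasDerivAt t hl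

/-- The quadratic upper bound for a function with `M`-Lipschitz gradient. -/
lemma le_quadratic_of_lipschitz_gradient {f : E → ℝ} {M : ℝ} (hf : Differentiable ℝ f)
    (hM : ∀ x y, ‖gradient f x - gradient f y‖ ≤ M * ‖x - y‖) (x v : E) :
    f (x + v) ≤ f x + ⟪gradient f x, v⟫ + M / 2 * ‖v‖ ^ 2 := by
  have hd : ∀ t : ℝ, HasDerivAt
      (fun t : ℝ => f (x + t • v) - (t * ⟪gradient f x, v⟫ + M / 2 * ‖v‖ ^ 2 * t ^ 2))
      (⟪gradient f (x + t • v), v⟫ - (⟪gradient f x, v⟫ + M * ‖v‖ ^ 2 * t)) t := by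
    intro t
    refine (hasDerivAt_comp_line hf x v t).sub ?_
    refine (((hasDerivAt_id' t).mul_const ⟪gradient f x, v⟫).fun_add
      ((hasDerivAt_pow 2 t).const_mul (M / 2 * ‖v‖ ^ 2))).congr_deriv ?_
    push_cast
    ring
  have hanti := antitoneOn_of_deriv_nonpos (convex_Icc (0 : ℝ) 1)
    (fun t _ => (hd t).continuousAt.continuousWithinAt)
    (fun t _ => (hd t).differentiableAt.differentiableWithinAt)
    (fun t ht => by
      rw [interior_Icc] at ht
      rw [(hd t).deriv]
      have h1 := real_inner_le_norm (gradient f (x + t • v) - gradient f x) v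
      have h2 := hM (x + t • v) x
      rw [add_sub_cancel_left, norm_smul, Real.norm_of_nonneg ht.1.le] at h2
      rw [inner_sub_left] at h1
      nlinarith [mul_le_mul_of_nonneg_right h2 (norm_nonneg v)])
  have h := hanti (Set.left_mem_Icc.2 zero_le_one) (Set.right_mem_Icc.2 zero_le_one) zero_le_one
  simp only [one_smul, zero_smul, add_zero] at h
  linarith

/-- The quadratic lower bound for a differentiable `m`-strongly convex function. -/
lemma quadratic_le_of_strongly_convex {f : E → ℝ} {m : ℝ} (hf : Differentiable ℝ f)
    (hc : ConvexOn ℝ Set.univ (fun x => f x - m / 2 * ‖x‖ ^ 2)) (x v : E) :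
    f x + ⟪gradient f x, v⟫ + m / 2 * ‖v‖ ^ 2 ≤ f (x + v) := by
  have hline : ConvexOn ℝ Set.univ
      (fun t : ℝ => f (x + t • v) - m / 2 * ‖x + t • v‖ ^ 2) := by
    have h := hc.comp_affineMap (AffineMap.lineMap x (x + v) : ℝ →ᵃ[ℝ] E)
    have he : (fun t : ℝ => f (x + t • v) - m / 2 * ‖x + t • v‖ ^ 2) =
        (fun x => f x - m / 2 * ‖x‖ ^ 2) ∘ (AffineMap.lineMap x (x + v) : ℝ →ᵃ[ℝ] E) := by
      funext t
      simp [AffineMap.lineMap_apply, add_comm]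
    rw [he]
    simpa using h
  have hn : ∀ t : ℝ, ‖x + t • v‖ ^ 2 = ‖x‖ ^ 2 + (t * (2 * ⟪x, v⟫) + ‖v‖ ^ 2 * t ^ 2) := by
    intro t
    rw [norm_add_sq_real, inner_smul_right, norm_smul, mul_pow, Real.norm_eq_abs, sq_abs]
    ring
  have hq : HasDerivAt (fun t : ℝ => ‖x + t • v‖ ^ 2) (2 * ⟪x, v⟫) 0 := by
    simp only [hn]
    refine ((((hasDerivAt_id' (0 : ℝ)).mul_const (2 * ⟪x, v⟫)).fun_add
      ((hasDerivAt_pow 2 (0 : ℝ)).const_mul (‖v‖ ^ 2))).const_add (‖x‖ ^ 2)).congr_deriv ?_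
    push_cast
    ring
  have hd := (hasDerivAt_comp_line hf x v 0).sub (hq.const_mul (m / 2))
  have h := hline.le_slope_of_hasDerivAt (Set.mem_univ 0) (Set.mem_univ 1) zero_lt_one hd
  have hn1 := hn 1
  simp only [slope_def_field, one_smul, zero_smul, add_zero] at h hn1
  rw [sub_zero, div_one, hn1] at h
  linarith

/-- The interpolation inequality for `m`-strongly convex functions with `M`-Lipschitz gradient. -/
lemma strongly_convex_smooth_interpolation {f : E → ℝ} {m M : ℝ} (hmM : m < M)
    (hc : ConvexOn ℝ Set.univ (fun x => f x - m / 2 * ‖x‖ ^ 2)) (hf : Differentiable ℝ f)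
    (hM : ∀ x y, ‖gradient f x - gradient f y‖ ≤ M * ‖x - y‖) (x y : E) :
    f y + ⟪gradient f y, x - y⟫ + m / 2 * ‖x - y‖ ^ 2
      + ‖gradient f x - gradient f y - m • (x - y)‖ ^ 2 / (2 * (M - m)) ≤ f x := by
  have hL : M - m ≠ 0 := (sub_pos.2 hmM).ne'
  obtain ⟨w, hw⟩ : ∃ w, w = gradient f x - gradient f y - m • (x - y) := ⟨_, rfl⟩
  have hgx : gradient f x = w + gradient f y + m • (x - y) := by rw [hw]; abel
  have h1 := le_quadratic_of_lipschitz_gradient hf hM x (-(M - m)⁻¹ • w)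
  have h2 := quadratic_le_of_strongly_convex hf hc y ((x - y) + -(M - m)⁻¹ • w)
  rw [← add_assoc, add_sub_cancel] at h2
  rw [← hw]
  rw [hgx] at h1
  have h3 := h2.trans h1
  generalize x - y = d at h3 ⊢
  simp only [← real_inner_self_eq_norm_sq, inner_add_left, inner_add_right, inner_smul_left,
    inner_smul_right, RCLike.conj_to_real, real_inner_comm d w] at h3 ⊢
  refine le_of_sub_nonneg ((sub_nonneg.2 h3).trans_eq ?_)
  field_simp
  ring

end Interpolation

/-- The dual multipliers certifying the two-step rate: `p, r, t, u, v` weigh the interpolation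
inequalities, and the equations match the coefficients of the Gram matrix. -/
lemma exists_two_step_multipliers {m M S : ℝ} (hm : 0 < m) (hmM : m < M) (hS0 : 0 ≤ S)
    (hS : S ^ 2 = M ^ 2 + (M - m) ^ 2) {α₀ α₁ : ℝ}
    (hα₀ : α₀ = 2 / (m + S)) (hα₁ : α₁ = 2 / (2 * M + m - S)) :
    0 < m + S ∧ 0 < 2 * M + m - S ∧ 0 < S - M ∧
    ∃ p r t u v : ℝ, 0 ≤ p ∧ 0 ≤ r ∧ 0 ≤ t ∧ 0 ≤ u ∧ 0 ≤ v ∧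
      u = p + v ∧ t = r + p ∧
      p + α₀ * m * v = 2 * (1 - α₀ * m) * (1 - α₁ * m) ^ 2 * α₀ ∧
      (1 - α₀ * m) * r - α₀ * m * u = 2 * (1 - α₀ * m) * (1 - α₁ * m) * α₁ ∧
      u / (M - m) = α₀ * v + (1 - α₁ * m) ^ 2 * α₀ ^ 2 ∧
      (u + v) / (M - m) = α₀ * (r + u) - 2 * (1 - α₁ * m) * α₀ * α₁ ∧
      (r + u) / (M - m) = α₁ ^ 2 := by
  have hL : 0 < M - m := sub_pos.2 hmM
  have hD₀ : 0 < m + S := by linarith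
  have hN : 0 < S - M := by nlinarith
  have hT : 0 < 2 * M - m - S := by nlinarith
  have hD₁ : 0 < 2 * M + m - S := by linarith
  have hSm : 0 < S - m := by linarith
  have hb : 1 - α₁ * m = (2 * M - m - S) / (2 * M + m - S) := by rw [hα₁]; field_simp; ring
  have ha : 1 - α₀ * m = (S - m) / (m + S) := by rw [hα₀]; field_simp; ring
  refine ⟨hD₀, hD₁, hN,
    8 * (2 * M - m - S) * (S - M) * (M - m) / ((2 * M + m - S) ^ 2 * (m + S) ^ 2),
    4 * (2 * M - m - S) / (2 * M + m - S) ^ 2 + 8 * m * (S - M) / ((m + S) * (2 * M + m - S) ^ 2),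
    4 * (2 * M - m - S) / (2 * M + m - S) ^ 2 + 8 * m * (S - M) / ((m + S) * (2 * M + m - S) ^ 2)
      + 8 * (2 * M - m - S) * (S - M) * (M - m) / ((2 * M + m - S) ^ 2 * (m + S) ^ 2),
    4 * (S - m) * (S - M) / ((m + S) * (2 * M + m - S) ^ 2),
    4 * (2 * M - m - S) * (S - M) / ((2 * M + m - S) ^ 2 * (m + S)),
    by positivity, by positivity, by positivity, by positivity, by positivity, ?_, rfl, ?_, ?_,
    ?_, ?_, ?_⟩ <;> (try rw [hb]) <;> (try rw [ha]) <;> (try rw [hα₀]) <;> (try rw [hα₁]) <;>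
    field_simp
  · congr 1; linear_combination 8 * hS
  · linear_combination 4 * hS
  · ring
  · congr 1; linear_combination 4 * (S - m) * hS
  · congr 1; ring
  · ring


/-- **Two-step optimal schedule guarantee** (from Theorem 8.10 of Altschuler 2018).
With `S = √(M² + (M−m)²)`, the stepsizes `α₀ = 2/(m+S)` and `α₁ = 2/(2M+m−S)` make two
steps of gradient descent on any `m`-strongly convex `M`-smooth function contract the
distance to the minimizer by the factor `R₂ = (S−M)/(2m+S−M)`. -/
theorem two_step_schedule_rate (m M : ℝ) (hm : 0 < m) (hmM : m < M)
    (S α₀ α₁ R₂ : ℝ)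
    (hS : S = Real.sqrt (M ^ 2 + (M - m) ^ 2))
    (hα₀ : α₀ = 2 / (m + S)) (hα₁ : α₁ = 2 / (2 * M + m - S))
    (hR₂ : R₂ = (S - M) / (2 * m + S - M)) :
    ∀ (d : ℕ) (f : EuclideanSpace ℝ (Fin d) → ℝ),
      ConvexOn ℝ Set.univ (fun x => f x - m / 2 * ‖x‖ ^ 2) →
      Differentiable ℝ f →
      (∀ x y : EuclideanSpace ℝ (Fin d), ‖gradient f x - gradient f y‖ ≤ M * ‖x - y‖) →
      ∀ xstar : EuclideanSpace ℝ (Fin d), (∀ y, f xstar ≤ f y) →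
      ∀ x₀ x₁ x₂ : EuclideanSpace ℝ (Fin d),
        x₁ = x₀ - α₀ • gradient f x₀ →
        x₂ = x₁ - α₁ • gradient f x₁ →
        ‖x₂ - xstar‖ ≤ R₂ * ‖x₀ - xstar‖ := by
  intro d f hc hf hM xstar hmin x₀ x₁ x₂ hx₁ hx₂
  have hS0 : 0 ≤ S := hS ▸ Real.sqrt_nonneg _
  have hS2 : S ^ 2 = M ^ 2 + (M - m) ^ 2 := by
    rw [hS, Real.sq_sqrt (by positivity)]
  obtain ⟨hD₀, hD₁, hN, p, r, t, u, v, hp, hr, ht, hu, hv, hupv, htrp, e₁, e₂, e₃, e₄, e₅⟩ :=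
    exists_two_step_multipliers hm hmM hS0 hS2 hα₀ hα₁
  have hR : R₂ = (1 - α₀ * m) * (1 - α₁ * m) := by
    have h₀ : 1 - α₀ * m = (S - m) / (m + S) := by rw [hα₀]; field_simp; ring
    have h₁ : 1 - α₁ * m = (2 * M - m - S) / (2 * M + m - S) := by rw [hα₁]; field_simp; ring
    rw [hR₂, h₀, h₁, div_mul_div_comm, div_eq_div_iff (by linarith) (mul_pos hD₀ hD₁).ne']
    linear_combination 2 * m * hS2
  have hR0 : 0 ≤ R₂ := hR₂ ▸ div_nonneg hN.le (by linarith)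
  have hgs : gradient f xstar = 0 := by
    have : IsLocalMin f xstar := Filter.Eventually.of_forall hmin
    simp [gradient, this.fderiv_eq_zero]
  have hI := strongly_convex_smooth_interpolation hmM hc hf hM
  have q₁ := hI xstar x₀
  have q₂ := hI xstar x₁
  have q₃ := hI x₁ xstar
  have q₄ := hI x₀ x₁
  have q₅ := hI x₁ x₀
  obtain ⟨y, hy⟩ : ∃ y, y = x₀ - xstar := ⟨_, rfl⟩
  obtain ⟨s₀, hs₀⟩ : ∃ s, s = gradient f x₀ - m • y := ⟨_, rfl⟩
  obtain ⟨s₁, hs₁⟩ : ∃ s, s = gradient f x₁ - m • (x₁ - xstar) := ⟨_, rfl⟩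
  have hg₀ : gradient f x₀ = s₀ + m • y := by rw [hs₀]; abel
  have d₁ : x₁ - xstar = (1 - α₀ * m) • y + -α₀ • s₀ := by
    rw [hx₁, hs₀, hy]; module
  have d₁' : xstar - x₁ = -(1 - α₀ * m) • y + α₀ • s₀ := by
    rw [← neg_sub, d₁]; module
  have hg₁ : gradient f x₁ = s₁ + m • ((1 - α₀ * m) • y + -α₀ • s₀) := by
    rw [hs₁, d₁]; abel
  have d₀' : xstar - x₀ = (-1 : ℝ) • y := by rw [hy]; module
  have d₁₀ : x₁ - x₀ = -(α₀ * m) • y + -α₀ • s₀ := by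
    rw [hx₁, hg₀]; module
  have d₀₁ : x₀ - x₁ = (α₀ * m) • y + α₀ • s₀ := by
    rw [hx₁, hg₀]; module
  have d₂ : x₂ - xstar = ((1 - α₀ * m) * (1 - α₁ * m)) • y + -((1 - α₁ * m) * α₀) • s₀
      + -α₁ • s₁ := by
    rw [hx₂, hg₁, sub_right_comm, d₁]; module
  have w₁ : gradient f xstar - gradient f x₀ - m • (xstar - x₀) = (-1 : ℝ) • s₀ := by
    rw [hgs, hg₀, d₀']; module
  have w₂ : gradient f xstar - gradient f x₁ - m • (xstar - x₁) = (-1 : ℝ) • s₁ := by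
    rw [hgs, hg₁, d₁']; module
  have w₃ : gradient f x₁ - gradient f xstar - m • (x₁ - xstar) = s₁ := by
    rw [hgs, hg₁, d₁]; module
  have w₄ : gradient f x₀ - gradient f x₁ - m • (x₀ - x₁) = s₀ + (-1 : ℝ) • s₁ := by
    rw [hg₀, hg₁, d₀₁]; module
  have w₅ : gradient f x₁ - gradient f x₀ - m • (x₁ - x₀) = s₁ + (-1 : ℝ) • s₀ := by
    rw [hg₀, hg₁, d₁₀]; module
  rw [w₁, d₀', hg₀] at q₁
  rw [w₂, d₁', hg₁] at q₂
  rw [w₃, d₁, hgs] at q₃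
  rw [w₄, d₀₁, hg₁] at q₄
  rw [w₅, d₁₀, hg₀] at q₅
  rw [← hy]
  refine le_of_sq_le_sq ?_ (mul_nonneg hR0 (norm_nonneg _))
  rw [mul_pow, hR, d₂]
  simp only [← real_inner_self_eq_norm_sq, inner_add_left, inner_add_right, inner_smul_left,
    inner_smul_right, RCLike.conj_to_real, real_inner_comm y s₀, real_inner_comm y s₁,
    real_inner_comm s₀ s₁, inner_zero_left] at q₁ q₂ q₃ q₄ q₅ ⊢
  have key := add_nonneg (add_nonneg (add_nonneg (add_nonneg
    (mul_nonneg hp (sub_nonneg.2 q₁)) (mul_nonneg hr (sub_nonneg.2 q₂)))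
    (mul_nonneg ht (sub_nonneg.2 q₃))) (mul_nonneg hu (sub_nonneg.2 q₄)))
    (mul_nonneg hv (sub_nonneg.2 q₅))
  refine le_of_sub_nonneg (key.trans_eq ?_)
  simp only [show ∀ z : ℝ, z / (2 * (M - m)) = z * ((M - m)⁻¹ / 2) by intro z; field_simp]
  rw [div_eq_mul_inv] at e₃ e₄ e₅
  subst hupv htrp
  linear_combination e₁ * ⟪y, s₀⟫ + e₂ * ⟪y, s₁⟫ - e₃ * ⟪s₀, s₀⟫ + e₄ * ⟪s₀, s₁⟫ - e₅ * ⟪s₁, s₁⟫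
end

section
/- Let 0 < m < M, S = √(M² + (M−m)²), α_0 = 2/(m+S), α_1 = 2/(2M+m−S), and R_2 = (S−M)/(2m+S−M). For every dimension d, every function f : ℝ^d → ℝ that is m-strongly convex and differentiable with M-Lipschitz gradient, with minimizer x*, every initial point x_0, and every natural number n, the gradient descent iterates with the cyclic schedule (α_0, α_1, α_0, α_1, …), i.e. x_{t+1} = x_t − α_{t mod 2} ∇f(x_t), satisfy ‖x_{2n} − x*‖ ≤ R_2^n ‖x_0 − x*‖. -/
section GradientInequalities

variable {E : Type*} [NormedAddCommGroup E] [InnerProductSpace ℝ E] [CompleteSpace E]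

theorem HasGradientAt.hasDerivAt_comp_line {f : E → ℝ} {g : E} (x d : E) (t : ℝ)
    (h : HasGradientAt f g (x + t • d)) :
    HasDerivAt (fun s : ℝ => f (x + s • d)) (inner ℝ g d) t := by
  have hline : HasDerivAt (fun s : ℝ => x + s • d) d t := by
    simpa using ((hasDerivAt_id t).smul_const d).const_add x
  simpa [Function.comp_def] using h.hasFDerivAt.comp_hasDerivAt t hline

/-- The descent lemma for functions with an `M`-Lipschitz gradient. -/
theorem le_add_inner_add_of_gradient_lipschitz {f : E → ℝ} {M : ℝ} (hf : Differentiable ℝ f)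
    (hLip : ∀ x y, ‖gradient f x - gradient f y‖ ≤ M * ‖x - y‖) (x d : E) :
    f (x + d) ≤ f x + inner ℝ (gradient f x) d + M / 2 * ‖d‖ ^ 2 := by
  let ψ : ℝ → ℝ := fun t => f (x + t • d) - t * inner ℝ (gradient f x) d - M / 2 * ‖d‖ ^ 2 * t ^ 2
  have hψ (t : ℝ) : HasDerivAt ψ (inner ℝ (gradient f (x + t • d)) d
      - inner ℝ (gradient f x) d - M * ‖d‖ ^ 2 * t) t := by
    have h₁ := (hf (x + t • d)).hasGradientAt.hasDerivAt_comp_line x d t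
    have h₂ := (hasDerivAt_id t).mul_const (inner ℝ (gradient f x) d)
    have h₃ := (hasDerivAt_pow 2 t).const_mul (M / 2 * ‖d‖ ^ 2)
    refine ((h₁.sub h₂).sub h₃).congr_deriv ?_
    norm_num
    ring
  have hanti : AntitoneOn ψ (Set.Icc 0 1) := by
    refine antitoneOn_of_deriv_nonpos (convex_Icc 0 1)
      (fun t _ => (hψ t).continuousAt.continuousWithinAt)
      (fun t _ => (hψ t).differentiableAt.differentiableWithinAt) fun t ht => ?_
    rw [interior_Icc] at ht
    have hinner := real_inner_le_norm (gradient f (x + t • d) - gradient f x) d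
    have hgrad := hLip (x + t • d) x
    rw [add_sub_cancel_left, norm_smul, Real.norm_of_nonneg ht.1.le] at hgrad
    have hmul := mul_le_mul_of_nonneg_right hgrad (norm_nonneg d)
    rw [inner_sub_left] at hinner
    rw [(hψ t).deriv]
    linarith
  have h := hanti (Set.left_mem_Icc.2 zero_le_one) (Set.right_mem_Icc.2 zero_le_one) zero_le_one
  simp only [ψ, one_smul, zero_smul, add_zero] at h
  linarith

theorem ConvexOn.add_inner_le_of_hasGradientAt {h : E → ℝ} {g x : E}
    (hc : ConvexOn ℝ Set.univ h) (hg : HasGradientAt h g x) (d : E) :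
    h x + inner ℝ g d ≤ h (x + d) := by
  have hline : ConvexOn ℝ Set.univ (fun t : ℝ => h (x + t • d)) := by
    have := hc.comp_affineMap (AffineMap.lineMap x (x + d))
    simpa [Function.comp_def, AffineMap.lineMap_apply, add_comm] using this
  have hderiv : HasDerivAt (fun t : ℝ => h (x + t • d)) (inner ℝ g d) 0 :=
    HasGradientAt.hasDerivAt_comp_line x d 0 (by simpa using hg)
  have hslope := hline.le_slope_of_hasDerivAt (Set.mem_univ 0) (Set.mem_univ 1) zero_lt_one hderiv
  simp only [slope_def_field, one_smul, zero_smul, add_zero, sub_zero, div_one] at hslope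
  linarith

theorem hasGradientAt_sub_mul_norm_sq {f : E → ℝ} (hf : Differentiable ℝ f) (m : ℝ) (x : E) :
    HasGradientAt (fun z => f z - m / 2 * ‖z‖ ^ 2) (gradient f x - m • x) x := by
  rw [hasGradientAt_iff_hasFDerivAt]
  refine ((hf x).hasGradientAt.hasFDerivAt.sub
    ((hasStrictFDerivAt_norm_sq x).hasFDerivAt.const_mul (m / 2))).congr_fderiv ?_
  ext z
  simp
  ring

/-- The interpolation inequality for `m`-strongly convex `M`-smooth functions, written in terms of
the rescaled remainder obtained by removing the quadratic `m / 2 * ‖· - c‖ ^ 2`. -/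
theorem half_norm_sq_le_of_strongConvex_of_smooth {f : E → ℝ} {m M : ℝ} (hmM : m < M)
    (hconv : ConvexOn ℝ Set.univ (fun x => f x - m / 2 * ‖x‖ ^ 2)) (hf : Differentiable ℝ f)
    (hLip : ∀ x y, ‖gradient f x - gradient f y‖ ≤ M * ‖x - y‖) (c : E) {k : E → ℝ} {v : E → E}
    (hk : ∀ z, f z = (M - m) * k z + m / 2 * ‖z - c‖ ^ 2)
    (hv : ∀ z, gradient f z = (M - m) • v z + m • (z - c)) (x y : E) :
    ‖v x - v y‖ ^ 2 / 2 ≤ k x - k y - inner ℝ (v y) (x - y) := by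
  have hL : 0 < M - m := sub_pos.2 hmM
  have hlower := hconv.add_inner_le_of_hasGradientAt (hasGradientAt_sub_mul_norm_sq hf m y)
    (x - y - (v x - v y))
  have hupper := le_add_inner_add_of_gradient_lipschitz hf hLip x (-(v x - v y))
  have hz : y + (x - y - (v x - v y)) = x + -(v x - v y) := by abel
  rw [hz] at hlower
  rw [hk x, hv x] at hupper
  rw [hk y, hv y] at hlower
  refine le_of_mul_le_mul_left ?_ hL
  simp only [← real_inner_self_eq_norm_sq, inner_add_left, inner_add_right, inner_sub_left,
    inner_sub_right, inner_neg_left, inner_neg_right, inner_smul_left, RCLike.conj_to_real] at hlower hupper ⊢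
  simp only [real_inner_comm x y, real_inner_comm x c, real_inner_comm y c,
    real_inner_comm x (v x), real_inner_comm x (v y), real_inner_comm y (v y),
    real_inner_comm (v x) (v y)] at hlower hupper ⊢
  linarith

end GradientInequalities

/-- The certificate for the contraction of two steps of gradient descent. The parameter `D` stands
for `(S - m) / (M - m)`; the hypotheses are the interpolation inequalities between the minimizer,
the initial point `x₀` and the next iterate `x₁`. -/
theorem two_step_contraction_of_interpolation {E : Type*} [NormedAddCommGroup E]
    [InnerProductSpace ℝ E] {D a b p q : ℝ} (hD1 : 1 < D) (hD : D < 3 / 2) (hD2 : D ^ 2 < 2)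
    (ha : a = 2 * (D - 1) / (2 - D)) (hb : b = 2 * (D - 1) / (D * (3 - 2 * D)))
    (hp : p = D * (D - 1) / (2 - D)) (hq : q = (D - 1) * (2 - D) / (D * (3 - 2 * D)))
    {x₀ v₀ x₁ v₁ x₂ : E} {k₀ k₁ : ℝ} (hx₁ : x₁ = p • x₀ - a • v₀) (hx₂ : x₂ = q • x₁ - b • v₁)
    (h_star_zero : ‖v₀‖ ^ 2 / 2 ≤ -k₀ + inner ℝ v₀ x₀)
    (h_star_one : ‖v₁‖ ^ 2 / 2 ≤ -k₁ + inner ℝ v₁ x₁)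
    (h_one_star : ‖v₁‖ ^ 2 / 2 ≤ k₁)
    (h_zero_one : ‖v₀ - v₁‖ ^ 2 / 2 ≤ k₀ - k₁ - inner ℝ v₁ (x₀ - x₁))
    (h_one_zero : ‖v₁ - v₀‖ ^ 2 / 2 ≤ k₁ - k₀ - inner ℝ v₀ (x₁ - x₀)) :
    ‖x₂‖ ≤ p * q * ‖x₀‖ := by
  have hD0 : 0 < D := by linarith
  have h1 : 0 < D - 1 := by linarith
  have h2 : 0 < 2 - D := by linarith
  have h3 : 0 < 3 - 2 * D := by linarith
  have h4 : 0 < 2 - D ^ 2 := by linarith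
  have hp0 : 0 ≤ p := by rw [hp]; positivity
  have hq0 : 0 ≤ q := by rw [hq]; positivity
  have hb0 : 0 ≤ b := by rw [hb]; positivity
  have c_one_zero : 0 ≤ b ^ 2 * (D - 1) ^ 2 := by positivity
  have c_star_zero : 0 ≤ 8 * (D - 1) ^ 3 * q ^ 2 / (2 - D) ^ 3 := by positivity
  have c_zero_one : 0 ≤ p * b * (2 * (D - 1) ^ 2 / (D * (3 - 2 * D))) := by positivity
  have c_star_one : 0 ≤ 2 * p * q * b + (1 - p) * b ^ 2 := by
    have : 1 - p = (2 - D ^ 2) / (2 - D) := by rw [hp]; field_simp; ring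
    rw [this]; positivity
  have c_one_star : 0 ≤ b ^ 2 * (D * (2 - D)) := by positivity
  have e₁ := mul_le_mul_of_nonneg_left h_one_zero c_one_zero
  have e₂ := mul_le_mul_of_nonneg_left h_star_zero c_star_zero
  have e₃ := mul_le_mul_of_nonneg_left h_zero_one c_zero_one
  have e₄ := mul_le_mul_of_nonneg_left h_star_one c_star_one
  have e₅ := mul_le_mul_of_nonneg_left h_one_star c_one_star
  refine le_of_sq_le_sq ?_ (by positivity)
  subst hx₂ hx₁
  simp only [mul_pow, ← real_inner_self_eq_norm_sq, inner_sub_left, inner_sub_right,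
    inner_smul_left, inner_smul_right, RCLike.conj_to_real] at e₁ e₂ e₃ e₄ e₅ ⊢
  simp only [real_inner_comm x₀ v₀, real_inner_comm x₀ v₁, real_inner_comm v₀ v₁]
    at e₁ e₂ e₃ e₄ e₅ ⊢
  generalize inner ℝ x₀ x₀ = X at *
  generalize inner ℝ v₀ v₀ = V at *
  generalize inner ℝ v₁ v₁ = W at *
  generalize inner ℝ x₀ v₀ = A at *
  generalize inner ℝ x₀ v₁ = B at *
  generalize inner ℝ v₀ v₁ = C at *
  rw [← sub_nonneg] at e₁ e₂ e₃ e₄ e₅ ⊢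
  refine (add_nonneg (add_nonneg (add_nonneg (add_nonneg e₁ e₂) e₃) e₄) e₅).trans_eq ?_
  subst ha hb hp hq
  field_simp
  ring

/-- Two steps of gradient descent with the optimal two-step schedule contract the distance to the
minimizer. -/
theorem optimal_two_step_contraction {E : Type*} [NormedAddCommGroup E] [InnerProductSpace ℝ E]
    [CompleteSpace E] {m M S : ℝ} (hm : 0 < m) (hmM : m < M)
    (hS : S = Real.sqrt (M ^ 2 + (M - m) ^ 2)) {f : E → ℝ}
    (hconv : ConvexOn ℝ Set.univ (fun x => f x - m / 2 * ‖x‖ ^ 2)) (hf : Differentiable ℝ f)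
    (hLip : ∀ x y, ‖gradient f x - gradient f y‖ ≤ M * ‖x - y‖) {c : E} (hmin : ∀ y, f c ≤ f y)
    {x₀ x₁ x₂ : E} (hx₁ : x₁ = x₀ - (2 / (m + S)) • gradient f x₀)
    (hx₂ : x₂ = x₁ - (2 / (2 * M + m - S)) • gradient f x₁) :
    ‖x₂ - c‖ ≤ (S - M) / (2 * m + S - M) * ‖x₀ - c‖ := by
  have hgrad : gradient f c = 0 := by
    have : IsLocalMin f c := Filter.Eventually.of_forall hmin
    rw [gradient, this.fderiv_eq_zero, map_zero]
  have hL : 0 < M - m := sub_pos.2 hmM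
  have hS2 : S ^ 2 = M ^ 2 + (M - m) ^ 2 := by rw [hS]; exact Real.sq_sqrt (by positivity)
  have hS0 : 0 ≤ S := hS ▸ Real.sqrt_nonneg _
  obtain ⟨L, hLM⟩ : ∃ L, L = M - m := ⟨_, rfl⟩
  obtain ⟨D, hDdef⟩ : ∃ D, D = (S - m) / L := ⟨_, rfl⟩
  obtain rfl : M = m + L := by linarith
  rw [← hLM] at hL hS2
  obtain rfl : S = m + L * D := by rw [hDdef]; field_simp; ring
  have hquad : L * (D ^ 2 - 2) = 2 * m * (1 - D) := by
    refine mul_left_cancel₀ hL.ne' ?_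
    linear_combination hS2
  have hD1 : 1 < D := by
    by_contra! h
    nlinarith [mul_nonneg hm.le (sub_nonneg.2 h)]
  have hD2 : D ^ 2 < 2 := by
    by_contra! h
    nlinarith [mul_pos hm (sub_pos.2 hD1)]
  have hD : D < 3 / 2 := by nlinarith
  have h1 : 0 < D - 1 := by linarith
  have h2 : 0 < 2 - D := by linarith
  have h3 : 0 < 3 - 2 * D := by linarith
  have hD0 : 0 < D := by linarith
  have hm_eq : m = L * (2 - D ^ 2) / (2 * (D - 1)) := by
    field_simp
    linarith
  have hα₀ : 2 / (m + (m + L * D)) = 2 * (D - 1) / (2 - D) / L := by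
    have : m + (m + L * D) = L * (2 - D) / (D - 1) := by rw [hm_eq]; field_simp; ring
    rw [this]; field_simp
  have hα₁ : 2 / (2 * (m + L) + m - (m + L * D)) = 2 * (D - 1) / (D * (3 - 2 * D)) / L := by
    have : 2 * (m + L) + m - (m + L * D) = L * (D * (3 - 2 * D)) / (D - 1) := by
      rw [hm_eq]; field_simp; ring
    rw [this]; field_simp
  have hR : (m + L * D - (m + L)) / (2 * m + (m + L * D) - (m + L)) =
      D * (D - 1) / (2 - D) * ((D - 1) * (2 - D) / (D * (3 - 2 * D))) := by
    have : 2 * m + (m + L * D) - (m + L) = L * (3 - 2 * D) / (D - 1) := by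
      rw [hm_eq]; field_simp; ring
    rw [this]; field_simp; ring
  let k : E → ℝ := fun z => (f z - m / 2 * ‖z - c‖ ^ 2) / L
  let v : E → E := fun z => L⁻¹ • (gradient f z - m • (z - c))
  have hv (z : E) : gradient f z = L • v z + m • (z - c) := by
    simp only [v, smul_inv_smul₀ hL.ne', sub_add_cancel]
  have hvc : v c = 0 := by simp [v, hgrad]
  have hQ := half_norm_sq_le_of_strongConvex_of_smooth hmM hconv hf hLip c (k := k) (v := v)
    (by intro z; rw [← hLM]; simp only [k]; field_simp; ring)
    (by intro z; rw [← hLM]; exact hv z)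
  rw [hR]
  rw [hα₀] at hx₁
  rw [hα₁] at hx₂
  have q₁ := hQ c x₀
  have q₂ := hQ c x₁
  have q₃ := hQ x₁ c
  have q₄ := hQ x₀ x₁
  have q₅ := hQ x₁ x₀
  simp only [hvc, zero_sub, sub_zero, norm_neg, inner_zero_left, inner_sub_right] at q₁ q₂ q₃ q₄ q₅
  refine two_step_contraction_of_interpolation hD1 hD hD2 rfl rfl rfl rfl (x₁ := x₁ - c)
    (v₀ := v x₀) (v₁ := v x₁) (k₀ := k x₀ - k c) (k₁ := k x₁ - k c) ?_ ?_ ?_ ?_ ?_ ?_ ?_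
  · rw [hx₁, hv, hm_eq]
    match_scalars <;> field_simp <;> ring
  · rw [hx₂, hv x₁, hm_eq]
    match_scalars <;> field_simp <;> ring
  · simp only [inner_sub_right]; linarith
  · simp only [inner_sub_right]; linarith
  · linarith
  · simp only [inner_sub_right]; linarith
  · simp only [inner_sub_right]; linarith


/-- **Cyclically repeating the optimal two-step schedule** `(α₀, α₁, α₀, α₁, …)` makes
gradient descent on any `m`-strongly convex `M`-smooth function satisfy
`‖x_{2n} − x*‖ ≤ R₂ⁿ ‖x₀ − x*‖`, where `S = √(M² + (M−m)²)`, `α₀ = 2/(m+S)`,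
`α₁ = 2/(2M+m−S)`, and `R₂ = (S−M)/(2m+S−M)`. -/
theorem cyclic_two_step_schedule_rate (m M : ℝ) (hm : 0 < m) (hmM : m < M)
    (S : ℝ) (hS : S = Real.sqrt (M ^ 2 + (M - m) ^ 2))
    (α : ℕ → ℝ)
    (hα₀ : α 0 = 2 / (m + S)) (hα₁ : α 1 = 2 / (2 * M + m - S))
    (R₂ : ℝ) (hR₂ : R₂ = (S - M) / (2 * m + S - M)) :
    ∀ (d : ℕ) (f : EuclideanSpace ℝ (Fin d) → ℝ),
      ConvexOn ℝ Set.univ (fun x => f x - m / 2 * ‖x‖ ^ 2) →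
      Differentiable ℝ f →
      (∀ x y : EuclideanSpace ℝ (Fin d), ‖gradient f x - gradient f y‖ ≤ M * ‖x - y‖) →
      ∀ xstar : EuclideanSpace ℝ (Fin d), (∀ y, f xstar ≤ f y) →
      ∀ x : ℕ → EuclideanSpace ℝ (Fin d),
        (∀ t, x (t + 1) = x t - α (t % 2) • gradient f (x t)) →
        ∀ n : ℕ, ‖x (2 * n) - xstar‖ ≤ R₂ ^ n * ‖x 0 - xstar‖ := by
  intro d f hconv hf hLip xstar hmin x hx n
  induction n with
  | zero => simp
  | succ n ih =>
    have h_even := hx (2 * n)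
    have h_odd := hx (2 * n + 1)
    rw [Nat.mul_mod_right, hα₀] at h_even
    rw [Nat.mul_add_mod, Nat.one_mod, hα₁] at h_odd
    have hstep := optimal_two_step_contraction hm hmM hS hconv hf hLip hmin h_even h_odd
    rw [← hR₂] at hstep
    have hSM : M ≤ S := by
      rw [hS]
      exact Real.le_sqrt_of_sq_le (by nlinarith [sq_nonneg (M - m)])
    have hR0 : 0 ≤ R₂ := by
      rw [hR₂]
      exact div_nonneg (by linarith) (by linarith)
    calc ‖x (2 * (n + 1)) - xstar‖ ≤ R₂ * ‖x (2 * n) - xstar‖ := hstep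
      _ ≤ R₂ * (R₂ ^ n * ‖x 0 - xstar‖) := mul_le_mul_of_nonneg_left ih hR0
      _ = R₂ ^ (n + 1) * ‖x 0 - xstar‖ := by ring
end

section
/- Let 0 < m < M, S = √(M² + (M−m)²), α_0 = 2/(m+S), α_1 = 2/(2M+m−S), and R_2 = (S−M)/(2m+S−M). For every pair of stepsizes (a, b) ∈ ℝ² with (a, b) ≠ (α_0, α_1), there exist a dimension d, a function f : ℝ^d → ℝ that is m-strongly convex and differentiable with M-Lipschitz gradient, with minimizer x*, and an initial point x_0 ≠ x*, such that the iterates x_1 = x_0 − a ∇f(x_0) and x_2 = x_1 − b ∇f(x_1) satisfy ‖x_2 − x*‖ > R_2 ‖x_0 − x*‖. In other words, (α_0, α_1) is the unique two-step schedule achieving the worst-case rate R_2. -/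
/-- A function on the line whose derivative vanishes at `0` and has slopes in `[m, M]` yields a
lower bound on the two-step contraction factor, for the initial point `1`. -/
theorem exists_euclidean_of_real {m M a b R : ℝ} (hm : 0 ≤ m) (φ g : ℝ → ℝ)
    (hφ : ∀ t, HasDerivAt φ (g t) t)
    (hg : ∀ s t, s ≤ t → m * (t - s) ≤ g t - g s ∧ g t - g s ≤ M * (t - s))
    (hmin : ∀ t, φ 0 ≤ φ t)
    (h : R < |1 - a * g 1 - b * g (1 - a * g 1)|) :
    ∃ (d : ℕ) (f : EuclideanSpace ℝ (Fin d) → ℝ),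
        ConvexOn ℝ Set.univ (fun x => f x - m / 2 * ‖x‖ ^ 2) ∧
        Differentiable ℝ f ∧
        (∀ x y : EuclideanSpace ℝ (Fin d), ‖gradient f x - gradient f y‖ ≤ M * ‖x - y‖) ∧
        ∃ xstar : EuclideanSpace ℝ (Fin d), (∀ y, f xstar ≤ f y) ∧
        ∃ x₀ : EuclideanSpace ℝ (Fin d), x₀ ≠ xstar ∧
          ∀ x₁ x₂ : EuclideanSpace ℝ (Fin d),
            x₁ = x₀ - a • gradient f x₀ →
            x₂ = x₁ - b • gradient f x₁ →
            ‖x₂ - xstar‖ > R * ‖x₀ - xstar‖ := by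
  have hnorm : ∀ x : EuclideanSpace ℝ (Fin 1), ‖x‖ = |x 0| := fun x => by
    simp [EuclideanSpace.norm_eq, Real.sqrt_sq_eq_abs]
  have hgrad : ∀ x : EuclideanSpace ℝ (Fin 1),
      HasGradientAt (fun x : EuclideanSpace ℝ (Fin 1) => φ (x 0))
        (EuclideanSpace.single 0 (g (x 0))) x := fun x => by
    rw [hasGradientAt_iff_hasFDerivAt]
    have h1 : HasFDerivAt (fun x : EuclideanSpace ℝ (Fin 1) => x 0)
        (EuclideanSpace.proj 0 : EuclideanSpace ℝ (Fin 1) →L[ℝ] ℝ) x :=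
      (EuclideanSpace.proj 0 : EuclideanSpace ℝ (Fin 1) →L[ℝ] ℝ).hasFDerivAt
    refine ((hφ (x 0)).comp_hasFDerivAt x h1).congr_fderiv ?_
    ext y
    simp [EuclideanSpace.inner_single_left]
  have hgr : ∀ x : EuclideanSpace ℝ (Fin 1),
      gradient (fun x : EuclideanSpace ℝ (Fin 1) => φ (x 0)) x =
        EuclideanSpace.single 0 (g (x 0)) := fun x => (hgrad x).gradient
  refine ⟨1, fun x => φ (x 0), ?_, fun x => (hgrad x).differentiableAt, ?_, 0, ?_,
    EuclideanSpace.single 0 1, ?_, ?_⟩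
  · have hd : ∀ t, HasDerivAt (fun t => φ t - m / 2 * t ^ 2) (g t - m * t) t := fun t => by
      have := (hφ t).sub (((hasDerivAt_id t).pow 2).const_mul (m / 2))
      refine this.congr_deriv ?_
      simp only [id]
      ring
    have hc : ConvexOn ℝ Set.univ (fun t => φ t - m / 2 * t ^ 2) := by
      refine Monotone.convexOn_univ_of_deriv (fun t => (hd t).differentiableAt) ?_
      intro s t hst
      rw [(hd s).deriv, (hd t).deriv]
      linarith [(hg s t hst).1]
    have := hc.comp_linearMap
      (EuclideanSpace.proj 0 : EuclideanSpace ℝ (Fin 1) →L[ℝ] ℝ).toLinearMap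
    simpa [Function.comp_def, hnorm] using this
  · intro x y
    rw [hgr, hgr, hnorm, hnorm]
    simp only [PiLp.sub_apply, PiLp.single_apply, if_true]
    rcases le_total (x 0) (y 0) with hxy | hxy
    · have := hg _ _ hxy
      have := mul_nonneg hm (sub_nonneg.2 hxy)
      rw [abs_of_nonpos (by linarith), abs_of_nonpos (by linarith)]
      linarith
    · have := hg _ _ hxy
      have := mul_nonneg hm (sub_nonneg.2 hxy)
      rw [abs_of_nonneg (by linarith), abs_of_nonneg (by linarith)]
      linarith
  · intro y
    simpa using hmin (y 0)
  · intro h0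
    simpa using congrArg (fun x : EuclideanSpace ℝ (Fin 1) => x 0) h0
  · rintro x₁ x₂ rfl rfl
    rw [hgr, hgr, hnorm, hnorm]
    simpa using h

/-- The function with derivative `A * t + B * max (t - p) 0` has slopes `A` before `p` and `A + B`
after `p`. -/
theorem slope_bounds_of_piecewise {m M A B p : ℝ} (hA : m ≤ A ∧ A ≤ M)
    (hAB : m ≤ A + B ∧ A + B ≤ M) {s t : ℝ} (hst : s ≤ t) :
    m * (t - s) ≤ (A * t + B * max (t - p) 0) - (A * s + B * max (s - p) 0) ∧
      (A * t + B * max (t - p) 0) - (A * s + B * max (s - p) 0) ≤ M * (t - s) := by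
  obtain ⟨q, hq⟩ : ∃ q, q = max (t - p) 0 - max (s - p) 0 := ⟨_, rfl⟩
  have hq0 : 0 ≤ q := by
    rw [hq, sub_nonneg]
    exact max_le_max_right 0 (by linarith)
  have hq1 : q ≤ t - s := by
    rw [hq, sub_le_iff_le_add]
    refine max_le ?_ ?_
    · linarith [le_max_left (s - p) 0]
    · linarith [le_max_right (s - p) 0]
  have hB : (A * t + B * max (t - p) 0) - (A * s + B * max (s - p) 0) =
      A * (t - s - q) + (A + B) * q := by
    rw [hq]
    ring
  rw [hB]
  have h1 := mul_le_mul_of_nonneg_right hA.1 (sub_nonneg.2 hq1)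
  have h2 := mul_le_mul_of_nonneg_right hA.2 (sub_nonneg.2 hq1)
  have h3 := mul_le_mul_of_nonneg_right hAB.1 hq0
  have h4 := mul_le_mul_of_nonneg_right hAB.2 hq0
  constructor <;> linarith

theorem hasDerivAt_max_sub_zero_sq (p t : ℝ) :
    HasDerivAt (fun t : ℝ => max (t - p) 0 ^ 2 / 2) (max (t - p) 0) t := by
  rcases lt_trichotomy t p with h | rfl | h
  · rw [max_eq_right (by linarith)]
    refine (hasDerivAt_const t (0 : ℝ)).congr_of_eventuallyEq ?_
    filter_upwards [Iio_mem_nhds h] with s hs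
    rw [max_eq_right (by linarith [Set.mem_Iio.1 hs])]
    norm_num
  · rw [sub_self, max_self, hasDerivAt_iff_isLittleO]
    simp only [sub_self, max_self, smul_zero, sub_zero]
    norm_num
    have hO : (fun s : ℝ => max (s - t) 0 ^ 2 / 2) =O[nhds t] fun s => (s - t) ^ 2 := by
      refine Asymptotics.IsBigO.of_bound 1 (Filter.Eventually.of_forall fun s => ?_)
      rw [Real.norm_of_nonneg (by positivity), Real.norm_of_nonneg (by positivity), one_mul]
      rcases le_total (s - t) 0 with hs | hs
      · rw [max_eq_right hs]
        nlinarith [sq_nonneg (s - t)]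
      · rw [max_eq_left hs]
        nlinarith [sq_nonneg (s - t)]
    refine hO.trans_isLittleO ?_
    simpa using Asymptotics.isLittleO_pow_sub_sub t one_lt_two
  · rw [max_eq_left (by linarith)]
    have h1 : HasDerivAt (fun t : ℝ => (t - p) ^ 2 / 2) (t - p) t := by
      refine ((((hasDerivAt_id t).sub_const p).pow 2).div_const 2).congr_deriv ?_
      simp
    refine h1.congr_of_eventuallyEq ?_
    filter_upwards [Ioi_mem_nhds h] with s hs
    rw [max_eq_left (by linarith [Set.mem_Ioi.1 hs])]

/-- A failing two-step factor of a piecewise quadratic with curvatures `A` before `p ≥ 0` and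
`A + B` after `p` yields a failing function on Euclidean space. -/
theorem exists_euclidean_of_piecewise {m M a b R A B p : ℝ} (hm : 0 ≤ m) (hA : m ≤ A ∧ A ≤ M)
    (hAB : m ≤ A + B ∧ A + B ≤ M) (hp : 0 ≤ p) {x y z : ℝ}
    (hx : A + B * max (1 - p) 0 = x) (hy : 1 - a * x = y)
    (hz : y - b * (A * y + B * max (y - p) 0) = z) (h : R < |z|) :
    ∃ (d : ℕ) (f : EuclideanSpace ℝ (Fin d) → ℝ),
        ConvexOn ℝ Set.univ (fun x => f x - m / 2 * ‖x‖ ^ 2) ∧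
        Differentiable ℝ f ∧
        (∀ x y : EuclideanSpace ℝ (Fin d), ‖gradient f x - gradient f y‖ ≤ M * ‖x - y‖) ∧
        ∃ xstar : EuclideanSpace ℝ (Fin d), (∀ y, f xstar ≤ f y) ∧
        ∃ x₀ : EuclideanSpace ℝ (Fin d), x₀ ≠ xstar ∧
          ∀ x₁ x₂ : EuclideanSpace ℝ (Fin d),
            x₁ = x₀ - a • gradient f x₀ →
            x₂ = x₁ - b • gradient f x₁ →
            ‖x₂ - xstar‖ > R * ‖x₀ - xstar‖ := by
  refine exists_euclidean_of_real hm (fun t => A * (t ^ 2 / 2) + B * (max (t - p) 0 ^ 2 / 2))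
    (fun t => A * t + B * max (t - p) 0) (fun t => ?_)
    (fun s t hst => slope_bounds_of_piecewise hA hAB hst) (fun t => ?_) ?_
  · have h1 : HasDerivAt (fun t : ℝ => t ^ 2 / 2) t t :=
      (((hasDerivAt_id t).pow 2).div_const 2).congr_deriv (by simp)
    exact (h1.const_mul A).add ((hasDerivAt_max_sub_zero_sq p t).const_mul B)
  · have h0 : max (0 - p) 0 = 0 := max_eq_right (by linarith)
    have hq : max (t - p) 0 ^ 2 ≤ t ^ 2 := by
      rcases le_total (t - p) 0 with ht | ht
      · rw [max_eq_right ht]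
        nlinarith [sq_nonneg t]
      · rw [max_eq_left ht]
        nlinarith
    simp only [h0]
    have h1 := mul_le_mul_of_nonneg_left hq (hm.trans hA.1)
    have h2 := mul_nonneg (hm.trans hAB.1) (sq_nonneg (max (t - p) 0))
    nlinarith
  · simpa only [mul_one, hx, hy, hz] using h

/-- The stepsizes `(α, β)` are the only ones for which the two quadratics and the two piecewise
quadratics with curvatures `m` and `M` have two-step factor at most `R`. -/
theorem eq_of_two_step_factors_le {m M α β R a b : ℝ} (hm : 0 < m) (hmM : m < M) (hR : 0 < R)
    (hRlt : R * (M + m) < M - m) (hαM : 1 < α * M) (hα : α * (M + m) < 2)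
    (hβM : 1 < β * M) (hβm : β * m < 1)
    (hmm : (1 - α * m) * (1 - β * m) = R) (hMM : (α * M - 1) * (β * M - 1) = R)
    (hmM' : (1 - α * m) * (β * M - 1) = R * (1 + α * (M - m)))
    (h₁ : |(1 - a * m) * (1 - b * m)| ≤ R) (h₂ : |(1 - a * M) * (1 - b * M)| ≤ R)
    (h₃ : 1 ≤ a * M → |(1 - a * M) * (1 - b * m)| ≤ R)
    (h₄ : 0 < a → a * m < 1 → |(1 - a * m) / (1 + a * (M - m)) * (1 - b * M)| ≤ R) :
    a = α ∧ b = β := by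
  have hΔ : 0 < M - m := sub_pos.2 hmM
  have hM : 0 < M := hm.trans hmM
  have hα0 : 0 < α := pos_of_mul_pos_left (one_pos.trans hαM) hM.le
  have ha : 0 < a := by
    by_contra! ha
    have drop : ∀ c u : ℝ, 0 ≤ c → |(1 - a * c) * u| ≤ R → |u| ≤ R := fun c u hc h => by
      have hac : 1 ≤ 1 - a * c := by linarith [mul_nonpos_of_nonpos_of_nonneg ha hc]
      rw [abs_mul, abs_of_pos (one_pos.trans_le hac)] at h
      exact (le_mul_of_one_le_left (abs_nonneg u) hac).trans h
    have e1 := (abs_le.1 (drop _ _ hm.le h₁)).2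
    have e2 := (abs_le.1 (drop _ _ hM.le h₂)).1
    nlinarith
  have h₁ := (abs_le.1 h₁).2
  have h₂ := (abs_le.1 h₂).2
  have haβ : a < β := by
    by_contra! hβa
    have haM : 1 < a * M := hβM.trans_le (by gcongr)
    have h₃ := (abs_le.1 (h₃ haM.le)).1
    have e : (a * M - 1) * (M - m) ≤ R * (M + m) := by nlinarith
    have e' : (β * M - 1) * (M - m) ≤ R * (M + m) :=
      (mul_le_mul_of_nonneg_right (by nlinarith) hΔ.le).trans e
    rw [← hMM] at e'
    have : (β * M - 1) * (2 - α * (M + m)) > 0 := mul_pos (by linarith) (by linarith)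
    nlinarith
  have ham : a * m < 1 := lt_of_le_of_lt (by gcongr) hβm
  have hαa : α ≤ a := by
    have h₄ := (abs_le.1 (h₄ ha ham)).1
    have hpos : 0 < 1 + a * (M - m) := by positivity
    rw [div_mul_eq_mul_div, le_div_iff₀ hpos] at h₄
    have e : (1 - a * m) * (M - m) ≤ R * (M + m + a * m * (M - m)) := by nlinarith
    have e' : (1 - α * m) * (M - m) = R * (M + m + α * m * (M - m)) := by
      linear_combination M * hmm + m * hmM'
    have : 0 ≤ (a - α) * (m * (M - m) * (1 + R)) := by nlinarith
    exact sub_nonneg.1 (nonneg_of_mul_nonneg_left this (by positivity))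
  have haM : 1 < a * M := hαM.trans_le (by gcongr)
  have haα : a ≤ α := by
    have e : (M - m) * ((1 - a * m) * (a * M - 1)) ≤ (M - m) * (R * (a * (M + m) - 1)) := by
      have e1 := mul_le_mul_of_nonneg_left h₁ (mul_nonneg hM.le (sub_nonneg.2 haM.le))
      have e2 := mul_le_mul_of_nonneg_left h₂ (mul_nonneg hm.le (sub_nonneg.2 ham.le))
      linarith
    have e := le_of_mul_le_mul_left e hΔ
    have hs : α + β = α * β * (M + m) := by
      refine mul_left_cancel₀ hΔ.ne' ?_
      linear_combination hmm - hMM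
    have hP : α * β * (m * M) = 1 - R := by
      linear_combination -hmm - m * hs
    have key : 0 ≤ (a - α) * ((a - β) * (m * M)) := by
      have : (a - α) * ((a - β) * (m * M)) =
          R * (a * (M + m) - 1) - (1 - a * m) * (a * M - 1) := by
        linear_combination (-a * m * M) * hs + (1 - a * (M + m)) * hP
      rw [this]
      linarith
    by_contra! hlt
    have : 0 < (a - α) * ((β - a) * (m * M)) :=
      mul_pos (sub_pos.2 hlt) (mul_pos (sub_pos.2 haβ) (by positivity))
    linarith
  obtain rfl := le_antisymm haα hαa
  refine ⟨rfl, le_antisymm ?_ ?_⟩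
  · have : (a * M - 1) * M * (b - β) ≤ 0 := by linarith
    have := nonpos_of_mul_nonpos_right this (mul_pos (by linarith) hM)
    linarith
  · have : (1 - a * m) * m * (β - b) ≤ 0 := by linarith
    have := nonpos_of_mul_nonpos_right this (mul_pos (by linarith) hm)
    linarith

/-- **Uniqueness of the optimal two-step schedule** (Theorem 8.10 of Altschuler 2018):
any pair of stepsizes `(a, b)` other than `(α₀, α₁) = (2/(m+S), 2/(2M+m−S))` fails to
achieve the worst-case two-step contraction rate `R₂ = (S−M)/(2m+S−M)` on the class of
`m`-strongly convex, `M`-smooth functions, where `S = √(M² + (M−m)²)`. -/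
theorem two_step_schedule_unique (m M : ℝ) (hm : 0 < m) (hmM : m < M)
    (S α₀ α₁ R₂ : ℝ)
    (hS : S = Real.sqrt (M ^ 2 + (M - m) ^ 2))
    (hα₀ : α₀ = 2 / (m + S)) (hα₁ : α₁ = 2 / (2 * M + m - S))
    (hR₂ : R₂ = (S - M) / (2 * m + S - M)) :
    ∀ a b : ℝ, (a, b) ≠ (α₀, α₁) →
      ∃ (d : ℕ) (f : EuclideanSpace ℝ (Fin d) → ℝ),
        ConvexOn ℝ Set.univ (fun x => f x - m / 2 * ‖x‖ ^ 2) ∧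
        Differentiable ℝ f ∧
        (∀ x y : EuclideanSpace ℝ (Fin d), ‖gradient f x - gradient f y‖ ≤ M * ‖x - y‖) ∧
        ∃ xstar : EuclideanSpace ℝ (Fin d), (∀ y, f xstar ≤ f y) ∧
        ∃ x₀ : EuclideanSpace ℝ (Fin d), x₀ ≠ xstar ∧
          ∀ x₁ x₂ : EuclideanSpace ℝ (Fin d),
            x₁ = x₀ - a • gradient f x₀ →
            x₂ = x₁ - b • gradient f x₁ →
            ‖x₂ - xstar‖ > R₂ * ‖x₀ - xstar‖ := by
  intro a b hab
  by_contra hcon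
  have hΔ : 0 < M - m := sub_pos.2 hmM
  have hM : 0 < M := hm.trans hmM
  have hS0 : 0 ≤ S := hS ▸ Real.sqrt_nonneg _
  have hSS : S ^ 2 = M ^ 2 + (M - m) ^ 2 := by
    rw [hS, Real.sq_sqrt (by positivity)]
  have hMS : M < S := lt_of_pow_lt_pow_left₀ 2 hS0 (by nlinarith)
  have hSM : S < 2 * M - m := lt_of_pow_lt_pow_left₀ 2 (by linarith) (by nlinarith)
  have d0 : 0 < m + S := by linarith
  have d1 : 0 < 2 * M + m - S := by linarith
  have d2 : 0 < 2 * m + S - M := by linarith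
  have hle : ∀ A B p x y z : ℝ, (m ≤ A ∧ A ≤ M) → (m ≤ A + B ∧ A + B ≤ M) → 0 ≤ p →
      A + B * max (1 - p) 0 = x → 1 - a * x = y →
      y - b * (A * y + B * max (y - p) 0) = z → |z| ≤ R₂ := by
    intro A B p x y z hA hAB hp hx hy hz
    by_contra! h
    exact hcon (exists_euclidean_of_piecewise hm.le hA hAB hp hx hy hz h)
  have hfac : a = α₀ ∧ b = α₁ := by
    refine eq_of_two_step_factors_le (R := R₂) hm hmM ?_ ?_ ?_ ?_ ?_ ?_ ?_ ?_ ?_ ?_ ?_ ?_ ?_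
    · rw [hR₂]
      exact div_pos (by linarith) d2
    · rw [hR₂, div_mul_eq_mul_div, div_lt_iff₀ d2]
      nlinarith
    · rw [hα₀, div_mul_eq_mul_div, lt_div_iff₀ d0]
      linarith
    · rw [hα₀, div_mul_eq_mul_div, div_lt_iff₀ d0]
      linarith
    · rw [hα₁, div_mul_eq_mul_div, lt_div_iff₀ d1]
      linarith
    · rw [hα₁, div_mul_eq_mul_div, div_lt_iff₀ d1]
      linarith
    · rw [hα₀, hα₁, hR₂]
      field_simp
      linear_combination (-2 * m) * hSS
    · rw [hα₀, hα₁, hR₂]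
      field_simp
      linear_combination (-2 * m) * hSS
    · rw [hα₀, hα₁, hR₂]
      field_simp
      linear_combination (2 * S - 2 * M - 2 * m) * hSS
    · exact hle m 0 0 m (1 - a * m) _ ⟨le_rfl, hmM.le⟩ (by simpa using hmM.le) le_rfl
        (by ring) rfl (by ring)
    · exact hle M 0 0 M (1 - a * M) _ ⟨hmM.le, le_rfl⟩ (by simpa using hmM.le) le_rfl
        (by ring) rfl (by ring)
    · intro haM
      refine hle m (M - m) 0 M (1 - a * M) _ ⟨le_rfl, hmM.le⟩ (by simpa using hmM.le) le_rfl
        (by norm_num) rfl ?_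
      rw [max_eq_right (by linarith)]
      ring
    · intro ha ham
      have hpos : 0 < 1 + a * (M - m) := by positivity
      obtain ⟨p, hp⟩ : ∃ p, p = (1 - a * m) / (1 + a * (M - m)) := ⟨_, rfl⟩
      have hp0 : 0 ≤ p := hp ▸ div_nonneg (by linarith) hpos.le
      have hp1 : p ≤ 1 := by
        rw [hp, div_le_one hpos]
        nlinarith
      have hpe : p * (1 + a * (M - m)) = 1 - a * m := by
        rw [hp, div_mul_cancel₀ _ hpos.ne']
      rw [← hp]
      refine hle M (-(M - m)) p (m + (M - m) * p) p _ ⟨hmM.le, le_rfl⟩ (by simpa using hmM.le) hp0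
        ?_ ?_ ?_
      · rw [max_eq_left (by linarith)]
        ring
      · linear_combination -hpe
      · rw [sub_self, max_self]
        ring
  exact hab (Prod.ext hfac.1 hfac.2)
end
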